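/- arXiv:2203.09659 — 6 statements merged into one kernel-verified Lean document; each statement's English description precedes it below -/
import Mathlib

section
/- Fix n, m ∈ ℕ, d ∈ {1,…,n} and t, η ∈ [0,1). Let F be a class of functions f : {−1,1}^n → [−1,1] such that for every f ∈ F one has Σ_{|S|>d} f̂(S)² ≤ t, and there exists a family S(f) of subsets of {1,…,n} with #S(f) ≤ m and Σ_{S ∉ S(f)} f̂(S)² ≤ η. Then for all ε, δ ∈ (0,1), the randomized query complexity satisfies Q_r(F, η + t + ε, δ) ≤ ⌈ (18m/ε) · log( (2/δ) · Σ_{r=0}^{d} C(n,r) ) ⌉. -/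
/-!
The learner estimates every Fourier coefficient `f̂(S)` with `|S| ≤ d` by its empirical average
`α_S` over the sample, discards those with `|α_S| < 2b`, and outputs `∑ α_S w_S` over the others,
where `b ^ 2 = ε / (9m)`.

* By Hoeffding's inequality and a union bound over the `N = ∑_{r ≤ d} C(n,r)` coefficients, all
  estimates are `b`-accurate except with probability at most `2 N exp(-Q b² / 2)`, which is at most
  `δ` as soon as `Q ≥ (18m/ε) log(2N/δ)` (`card_good_ge`). Probabilities are counts of
  sample tuples, so the Chernoff argument is run on finite sums; only Hoeffding's lemma for the
  moment generating function passes through measure theory (`sum_exp_le`).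
* If all estimates are `b`-accurate, thresholding at `2b` makes a squared error of at most `f̂(S)²`
  at every `S` and also at most `9b²` at every `S` with `|S| ≤ d` (`sq_threshold_le`). By Parseval,
  the total squared error is at most `t` from `|S| > d`, plus `η` from `S ∉ 𝒮`, plus
  `9 m b² = ε` from `S ∈ 𝒮` (`dist2_learner_le`).
-/

open Finset

namespace EIS

/-- Walsh function `w_S(x) = ∏_{i ∈ S} x_i`, with points of the hypercube encoded by
`Fin n → Bool` (`true ↦ 1`, `false ↦ -1`). -/
noncomputable def walsh {n : ℕ} (S : Finset (Fin n)) (x : Fin n → Bool) : ℝ :=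
  ∏ i ∈ S, (if x i then (1 : ℝ) else -1)

/-- Fourier–Walsh coefficient `f̂(S) = E_x f(x) w_S(x)`. -/
noncomputable def fourierCoeff {n : ℕ} (f : (Fin n → Bool) → ℝ) (S : Finset (Fin n)) : ℝ :=
  (∑ x : Fin n → Bool, f x * walsh S x) / 2 ^ n

/-- `f` has degree at most `d`: all Fourier coefficients above level `d` vanish. -/
def DegLE (n d : ℕ) (f : (Fin n → Bool) → ℝ) : Prop :=
  ∀ S : Finset (Fin n), d < S.card → fourierCoeff f S = 0

/-- Squared L₂ distance `‖f - g‖²_{L₂} = E_x (f(x) - g(x))²` w.r.t. the uniform measure. -/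
noncomputable def dist2 {n : ℕ} (f g : (Fin n → Bool) → ℝ) : ℝ :=
  (∑ x : Fin n → Bool, (f x - g x) ^ 2) / 2 ^ n

/-- `f` takes values in `[-1, 1]`. -/
def Bounded1 {n : ℕ} (f : (Fin n → Bool) → ℝ) : Prop := ∀ x, |f x| ≤ 1

/-- `f` is Boolean, i.e. takes values in `{-1, 1}`. -/
def BoolValued {n : ℕ} (f : (Fin n → Bool) → ℝ) : Prop := ∀ x, f x = 1 ∨ f x = -1

/-- The class `F_{n,d}` of `[-1,1]`-valued functions of degree at most `d`. -/
def Fclass (n d : ℕ) : Set ((Fin n → Bool) → ℝ) := {f | Bounded1 f ∧ DegLE n d f}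

/-- The class `B_{n,d}` of Boolean functions of degree at most `d`. -/
def Bclass (n d : ℕ) : Set ((Fin n → Bool) → ℝ) := {f | BoolValued f ∧ DegLE n d f}

/-- The Fourier tail `Σ_{|S| > d} f̂(S)²`. -/
noncomputable def fourierTail (n d : ℕ) (f : (Fin n → Bool) → ℝ) : ℝ :=
  ∑ S ∈ Finset.univ.filter (fun S : Finset (Fin n) => d < S.card), fourierCoeff f S ^ 2

/-- A deterministic adaptive learning algorithm: `query` maps the history of
(queried point, observed value) pairs to the next query point (in particular `query []` is the
fixed first query point), and `output` maps the final history to the hypothesis function. -/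
structure DetAlgo (n : ℕ) where
  query : List ((Fin n → Bool) × ℝ) → (Fin n → Bool)
  output : List ((Fin n → Bool) × ℝ) → ((Fin n → Bool) → ℝ)

/-- The history of the run of a deterministic adaptive algorithm `A` on the unknown function `f`
after `q` queries. -/
def runHist {n : ℕ} (A : DetAlgo n) (f : (Fin n → Bool) → ℝ) : ℕ → List ((Fin n → Bool) × ℝ)
  | 0 => []
  | q + 1 =>
      let h := runHist A f q
      h ++ [(A.query h, f (A.query h))]

/-- `A` learns the class `F` with `Q` queries and L₂-error `ε`:
for every `f ∈ F` the produced hypothesis `h` satisfies `‖h - f‖²_{L₂} ≤ ε`. -/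
def DetLearns {n : ℕ} (A : DetAlgo n) (Q : ℕ) (F : Set ((Fin n → Bool) → ℝ)) (ε : ℝ) : Prop :=
  ∀ f ∈ F, dist2 (A.output (runHist A f Q)) f ≤ ε

/-- The random-example algorithm `H` (a map from `Q` labeled examples to a hypothesis) learns the
class `F` with L₂-error `ε` and confidence `1 - δ`: for every `f ∈ F`, the fraction of
tuples `(X₁, …, X_Q)` of sample points (equivalently, the probability with respect to i.i.d.
uniform samples) for which `‖H((X₁, f(X₁)), …, (X_Q, f(X_Q))) - f‖²_{L₂} ≤ ε` is at
least `1 - δ`. -/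
def RandLearns {n : ℕ} (Q : ℕ)
    (H : (Fin Q → (Fin n → Bool) × ℝ) → ((Fin n → Bool) → ℝ))
    (F : Set ((Fin n → Bool) → ℝ)) (ε δ : ℝ) : Prop :=
  ∀ f ∈ F,
    (1 - δ) * ((2 : ℝ) ^ n) ^ Q ≤
      (Nat.card {X : Fin Q → Fin n → Bool //
        dist2 (H fun j => (X j, f (X j))) f ≤ ε} : ℝ)

/-- `g` depends only on the coordinates in `σ`. -/
def DependsOn {n : ℕ} (σ : Finset (Fin n)) (g : (Fin n → Bool) → ℝ) : Prop :=
  ∀ x y : Fin n → Bool, (∀ i ∈ σ, x i = y i) → g x = g y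

/-- `f` is a `(k, η)`-junta. -/
def Junta (n k : ℕ) (η : ℝ) (f : (Fin n → Bool) → ℝ) : Prop :=
  ∃ σ : Finset (Fin n), σ.card ≤ k ∧
    ∃ g : (Fin n → Bool) → ℝ, DependsOn σ g ∧ dist2 f g ≤ η

/-- The class `J_{n,k,η}` of `[-1,1]`-valued `(k, η)`-juntas. -/
def Jclass (n k : ℕ) (η : ℝ) : Set ((Fin n → Bool) → ℝ) := {f | Bounded1 f ∧ Junta n k η f}

end EIS

open EIS

/-! ### Hoeffding's inequality by counting -/

open MeasureTheory ProbabilityTheory in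
/-- Hoeffding's lemma for the uniform distribution on a finite type, in counting form. -/
lemma sum_exp_le {α : Type*} [Fintype α] [Nonempty α] (g : α → ℝ) (hg : ∀ x, |g x| ≤ 1) (s : ℝ) :
    ∑ x, Real.exp (s * (g x - (∑ y, g y) / Fintype.card α)) ≤
      Fintype.card α * Real.exp (s ^ 2 / 2) := by
  let _ : MeasurableSpace α := ⊤
  have hint : ∀ h : α → ℝ, ∫ x, h x ∂(PMF.uniformOfFintype α).toMeasure
      = (∑ x, h x) / Fintype.card α := by
    intro h
    rw [PMF.integral_eq_sum]
    simp [← Finset.mul_sum, div_eq_inv_mul]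
  have h := (hasSubgaussianMGF_of_mem_Icc (μ := (PMF.uniformOfFintype α).toMeasure)
    (X := g) (a := -1) (b := 1) (measurable_of_finite g).aemeasurable
    (ae_of_all _ fun x => abs_le.mp (hg x))).mgf_le s
  rw [mgf, hint, hint, div_le_iff₀ (by exact_mod_cast Fintype.card_pos)] at h
  refine h.trans_eq ?_
  rw [mul_comm]
  congr 3
  norm_num

/-- One-sided Hoeffding inequality for `Q` i.i.d. uniform samples, in counting form: the
Chernoff bound with parameter `b`. -/
lemma card_sum_ge_le {α : Type*} [Fintype α] [Nonempty α] (g : α → ℝ) (hg : ∀ x, |g x| ≤ 1)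
    (Q : ℕ) {b : ℝ} (hb : 0 ≤ b) :
    (#{X : Fin Q → α | Q * b ≤ ∑ j, (g (X j) - (∑ y, g y) / Fintype.card α)} : ℝ) ≤
      (Fintype.card α : ℝ) ^ Q * Real.exp (-(Q * b ^ 2 / 2)) := by
  set μ := (∑ y, g y) / Fintype.card α
  set A : Finset (Fin Q → α) := {X | Q * b ≤ ∑ j, (g (X j) - μ)}
  have h1 : (#A : ℝ) * Real.exp (Q * b ^ 2) ≤
      (Fintype.card α : ℝ) ^ Q * Real.exp (Q * b ^ 2 / 2) := by
    calc (#A : ℝ) * Real.exp (Q * b ^ 2)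
        = ∑ X ∈ A, Real.exp (Q * b ^ 2) := by simp
      _ ≤ ∑ X ∈ A, ∏ j, Real.exp (b * (g (X j) - μ)) := by
          refine Finset.sum_le_sum fun X hX => ?_
          have hX' : Q * b ≤ ∑ j, (g (X j) - μ) := (Finset.mem_filter.mp hX).2
          rw [← Real.exp_sum, ← Finset.mul_sum]
          exact Real.exp_le_exp.mpr (by nlinarith)
      _ ≤ ∑ X : Fin Q → α, ∏ j, Real.exp (b * (g (X j) - μ)) :=
          Finset.sum_le_sum_of_subset_of_nonneg (Finset.subset_univ _)
            fun _ _ _ => Finset.prod_nonneg fun _ _ => (Real.exp_pos _).le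
      _ = (∑ x, Real.exp (b * (g x - μ))) ^ Q := (Fintype.sum_pow (fun x => Real.exp (b * (g x - μ))) Q).symm
      _ ≤ (Fintype.card α * Real.exp (b ^ 2 / 2)) ^ Q :=
          pow_le_pow_left₀ (Finset.sum_nonneg fun _ _ => (Real.exp_pos _).le)
            (sum_exp_le g hg b) Q
      _ = _ := by rw [mul_pow, ← Real.exp_nat_mul, mul_div_assoc]
  have h2 := mul_le_mul_of_nonneg_right h1 (Real.exp_pos (-(Q * b ^ 2))).le
  rw [mul_assoc, ← Real.exp_add, mul_assoc, ← Real.exp_add, add_neg_cancel, Real.exp_zero,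
    mul_one] at h2
  refine h2.trans_eq ?_
  congr 2
  ring

/-- Two-sided Hoeffding inequality, in counting form. -/
lemma card_abs_sum_ge_le {α : Type*} [Fintype α] [Nonempty α] (g : α → ℝ)
    (hg : ∀ x, |g x| ≤ 1) (Q : ℕ) {b : ℝ} (hb : 0 ≤ b) :
    (#{X : Fin Q → α | Q * b ≤ |∑ j, (g (X j) - (∑ y, g y) / Fintype.card α)|} : ℝ) ≤
      2 * ((Fintype.card α : ℝ) ^ Q * Real.exp (-(Q * b ^ 2 / 2))) := by
  classical
  have h1 := card_sum_ge_le g hg Q hb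
  have h2 := card_sum_ge_le (fun x => -g x) (fun x => by simpa using hg x) Q hb
  have hneg : ∀ X : Fin Q → α, ∑ j, (-g (X j) - (∑ y, -g y) / Fintype.card α) =
      -∑ j, (g (X j) - (∑ y, g y) / Fintype.card α) := by
    intro X
    rw [← Finset.sum_neg_distrib, Finset.sum_neg_distrib (f := g)]
    exact Finset.sum_congr rfl fun _ _ => by ring
  simp only [hneg] at h2
  simp only [le_abs, Finset.filter_or]
  rw [two_mul]
  refine le_trans ?_ (add_le_add h1 h2)
  exact_mod_cast Finset.card_union_le _ _

/-! ### Fourier analysis on the hypercube -/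

/-- Completeness of the Walsh system: the sum factors as `∏ i, (1 + x_i y_i)`. -/
lemma sum_walsh_mul_walsh {n : ℕ} (x y : Fin n → Bool) :
    ∑ S : Finset (Fin n), walsh S x * walsh S y = if x = y then 2 ^ n else 0 := by
  simp only [walsh, ← Finset.prod_mul_distrib]
  rw [← Finset.powerset_univ, ← Finset.prod_one_add]
  split_ifs with h
  · subst h
    have : ∀ i, (1 : ℝ) + (if x i then 1 else -1) * (if x i then 1 else -1) = 2 := by
      intro i; split_ifs <;> norm_num
    rw [Finset.prod_congr rfl fun i _ => this i]
    simp
  · obtain ⟨i, hi⟩ := Function.ne_iff.mp h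
    refine Finset.prod_eq_zero (Finset.mem_univ i) ?_
    cases hx : x i <;> cases hy : y i <;> simp_all

/-- Parseval's identity. -/
lemma sum_sq_fourierCoeff {n : ℕ} (g : (Fin n → Bool) → ℝ) :
    ∑ S, fourierCoeff g S ^ 2 = (∑ x, g x ^ 2) / 2 ^ n := by
  have h : ∀ S : Finset (Fin n), fourierCoeff g S ^ 2 =
      (∑ x, ∑ y, g x * g y * (walsh S x * walsh S y)) / (2 ^ n * 2 ^ n) := by
    intro S
    rw [EIS.fourierCoeff, sq, div_mul_div_comm, Finset.sum_mul_sum]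
    congr 1
    exact Finset.sum_congr rfl fun _ _ => Finset.sum_congr rfl fun _ _ => by ring
  simp only [h]
  rw [← Finset.sum_div, Finset.sum_comm]
  simp only [Finset.sum_comm (s := (Finset.univ : Finset (Finset (Fin n)))), ← Finset.mul_sum,
    sum_walsh_mul_walsh]
  simp only [mul_ite, mul_zero, Finset.sum_ite_eq, Finset.mem_univ, if_true]
  rw [← Finset.sum_mul, mul_div_mul_right _ _ (by positivity)]
  simp only [sq]

/-- Orthonormality of the Walsh system. -/
lemma fourierCoeff_walsh {n : ℕ} (S T : Finset (Fin n)) :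
    fourierCoeff (walsh S) T = if S = T then 1 else 0 := by
  classical
  have hw : ∀ x : Fin n → Bool, walsh S x * walsh T x =
      ∏ i, ((if i ∈ S then (if x i then (1 : ℝ) else -1) else 1) *
        (if i ∈ T then (if x i then (1 : ℝ) else -1) else 1)) := by
    intro x
    rw [Finset.prod_mul_distrib, Finset.prod_ite_mem, Finset.prod_ite_mem, Finset.univ_inter,
      Finset.univ_inter, walsh, walsh]
  have key : ∑ x : Fin n → Bool, walsh S x * walsh T x = if S = T then 2 ^ n else 0 := by
    simp only [hw]
    rw [← Fintype.prod_sum fun (i : Fin n) (c : Bool) =>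
      ((if i ∈ S then (if c then (1 : ℝ) else -1) else 1) *
        (if i ∈ T then (if c then (1 : ℝ) else -1) else 1))]
    split_ifs with h
    · subst h
      have : ∀ i : Fin n, ∑ c : Bool, ((if i ∈ S then (if c then (1 : ℝ) else -1) else 1) *
        (if i ∈ S then (if c then (1 : ℝ) else -1) else 1)) = 2 := by
        intro i; by_cases hi : i ∈ S <;> simp [hi] <;> norm_num
      rw [Finset.prod_congr rfl fun i _ => this i]
      simp
    · have : ∃ i, ¬ (i ∈ S ↔ i ∈ T) := by
        by_contra! hc
        exact h (Finset.ext hc)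
      obtain ⟨i, hi⟩ := this
      refine Finset.prod_eq_zero (Finset.mem_univ i) ?_
      by_cases hS : i ∈ S <;> by_cases hT : i ∈ T <;> simp_all
  rw [EIS.fourierCoeff, key]
  split_ifs <;> simp

lemma dist2_sum_walsh {n : ℕ} (c : Finset (Fin n) → ℝ) (f : (Fin n → Bool) → ℝ) :
    dist2 (fun x => ∑ S, c S * walsh S x) f = ∑ S, (c S - fourierCoeff f S) ^ 2 := by
  rw [dist2, ← sum_sq_fourierCoeff (fun x => ∑ S, c S * walsh S x - f x)]
  refine Finset.sum_congr rfl fun T _ => ?_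
  congr 1
  have h : ∑ S, c S * fourierCoeff (walsh S) T = c T := by
    simp [fourierCoeff_walsh]
  rw [← h]
  simp only [EIS.fourierCoeff, sub_mul, Finset.sum_sub_distrib, sub_div, Finset.sum_mul,
    ← mul_div_assoc, ← Finset.sum_div, Finset.mul_sum]
  rw [Finset.sum_comm]
  simp only [mul_assoc]

/-! ### The learner and its error -/

/-- The empirical Fourier coefficient `(1/Q) ∑_j y_j w_S(x_j)` of a labeled sample `(x_j, y_j)`.
For `Q = 0` it is `0`. -/
noncomputable def empCoeff {n Q : ℕ} (D : Fin Q → (Fin n → Bool) × ℝ) (S : Finset (Fin n)) : ℝ :=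
  (∑ j, (D j).2 * walsh S (D j).1) / Q

open Classical in
/-- The coefficient of `w_S` in the learner's hypothesis: the empirical coefficient if `S` has at
most `d` elements and the empirical coefficient is at least `2 * b` in absolute value, else `0`. -/
noncomputable def learnerCoeff {n : ℕ} (d : ℕ) (b : ℝ) {Q : ℕ}
    (D : Fin Q → (Fin n → Bool) × ℝ) (S : Finset (Fin n)) : ℝ :=
  if S.card ≤ d ∧ 2 * b ≤ |empCoeff D S| then empCoeff D S else 0

/-- The low-degree learner with hard thresholding at `2 * b`. -/
noncomputable def learner {n : ℕ} (d : ℕ) (b : ℝ) {Q : ℕ}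
    (D : Fin Q → (Fin n → Bool) × ℝ) (x : Fin n → Bool) : ℝ :=
  ∑ S, learnerCoeff d b D S * walsh S x

/-- Hard thresholding at `2 * b` of a `b`-accurate estimate `a` of `c` has squared error at most
`(3 * b) ^ 2`, and never does worse than the estimate `0`. -/
lemma sq_threshold_le {a c b : ℝ} (hb : 0 ≤ b) (h : |a - c| ≤ b) :
    ((if 2 * b ≤ |a| then a else 0) - c) ^ 2 ≤ 9 * b ^ 2 ∧
      ((if 2 * b ≤ |a| then a else 0) - c) ^ 2 ≤ c ^ 2 := by
  have h1 := abs_sub_abs_le_abs_sub a c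
  have h2 := abs_sub_abs_le_abs_sub c a
  rw [abs_sub_comm] at h2
  split_ifs with ha
  · have h3 : (a - c) ^ 2 ≤ b ^ 2 := sq_le_sq' (by linarith [abs_le.mp h]) (abs_le.mp h).2
    refine ⟨by nlinarith, h3.trans ?_⟩
    rw [← sq_abs c]
    exact pow_le_pow_left₀ hb (by linarith) 2
  · push Not at ha
    rw [zero_sub, neg_sq]
    refine ⟨?_, le_rfl⟩
    rw [← sq_abs c]
    calc |c| ^ 2 ≤ (3 * b) ^ 2 := pow_le_pow_left₀ (abs_nonneg _) (by linarith) 2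
      _ = 9 * b ^ 2 := by ring

/-- Deterministic part of the analysis: if all empirical coefficients up to level `d` are
`b`-accurate, then the degrees above `d` cost at most `t`, the sets outside `𝒮` at most `η`, and
each set in `𝒮` at most `9 * b ^ 2`. -/
lemma dist2_learner_le {n d m Q : ℕ} {t η b : ℝ} {f : (Fin n → Bool) → ℝ}
    (ht : fourierTail n d f ≤ t) {𝒮 : Finset (Finset (Fin n))} (hm : 𝒮.card ≤ m)
    (hη : ∑ S ∈ Finset.univ \ 𝒮, fourierCoeff f S ^ 2 ≤ η) (hb : 0 ≤ b)
    (D : Fin Q → (Fin n → Bool) × ℝ)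
    (hD : ∀ S : Finset (Fin n), S.card ≤ d → |empCoeff D S - fourierCoeff f S| ≤ b) :
    dist2 (learner d b D) f ≤ η + t + m * (9 * b ^ 2) := by
  classical
  have hsplit : ∀ S : Finset (Fin n), (learnerCoeff d b D S - fourierCoeff f S) ^ 2 ≤
      (if S ∈ Finset.univ \ 𝒮 then fourierCoeff f S ^ 2 else 0) +
      (if d < S.card then fourierCoeff f S ^ 2 else 0) +
      (if S ∈ 𝒮 then 9 * b ^ 2 else 0) := by
    intro S
    have hc := sq_nonneg (fourierCoeff f S)
    have hb2 := sq_nonneg b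
    by_cases hS : S.card ≤ d
    · have h := sq_threshold_le hb (hD S hS)
      have hl : learnerCoeff d b D S = if 2 * b ≤ |empCoeff D S| then empCoeff D S else 0 := by
        simp [learnerCoeff, hS]
      rw [hl]
      by_cases hSS : S ∈ 𝒮
      · simpa [hSS, hS.not_gt] using h.1
      · simpa [hSS, hS.not_gt] using h.2
    · have hl : learnerCoeff d b D S = 0 := by simp [learnerCoeff, hS]
      rw [hl, zero_sub, neg_sq, if_pos (not_le.mp hS)]
      split_ifs <;> linarith
  calc dist2 (learner d b D) f
      = ∑ S, (learnerCoeff d b D S - fourierCoeff f S) ^ 2 := dist2_sum_walsh _ f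
    _ ≤ _ := Finset.sum_le_sum fun S _ => hsplit S
    _ = ∑ S ∈ Finset.univ \ 𝒮, fourierCoeff f S ^ 2 + fourierTail n d f +
          𝒮.card * (9 * b ^ 2) := by
        simp only [Finset.sum_add_distrib, fourierTail, Finset.sum_filter, Finset.sum_ite_mem,
          Finset.univ_inter, Finset.sum_const, nsmul_eq_mul]
    _ ≤ _ := by gcongr

/-! ### The probability of a good sample -/

lemma card_low_degree (n d : ℕ) :
    (#{S : Finset (Fin n) | S.card ≤ d} : ℝ) = ∑ r ∈ Finset.range (d + 1), (n.choose r : ℝ) := by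
  rw [Finset.card_eq_sum_card_fiberwise (f := Finset.card) (t := Finset.range (d + 1))]
  · push_cast
    refine Finset.sum_congr rfl fun r hr => ?_
    have : ({S ∈ ({S | S.card ≤ d} : Finset (Finset (Fin n))) | S.card = r}) =
        Finset.powersetCard r Finset.univ := by
      ext S
      have := Finset.mem_range.mp hr
      simp only [Finset.mem_filter, Finset.mem_univ, true_and, Finset.mem_powersetCard,
        Finset.subset_univ]
      omega
    rw [this]
    simp
  · intro S hS
    have : S.card ≤ d := by simpa using hS
    simpa using Nat.lt_succ_of_le this

lemma abs_walsh {n : ℕ} (S : Finset (Fin n)) (x : Fin n → Bool) : |walsh S x| = 1 := by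
  rw [walsh, Finset.abs_prod]
  refine Finset.prod_eq_one fun i _ => ?_
  split_ifs <;> simp

/-- Probabilistic part of the analysis: a union bound over the sets of size at most
`d`. The inequality
defining a good sample is strict and not divided by `Q`, so no sample is good when `Q = 0`. -/
lemma card_good_ge {n : ℕ} (d Q : ℕ) {b : ℝ} (hb : 0 ≤ b) {f : (Fin n → Bool) → ℝ}
    (hf : Bounded1 f) :
    (1 - (∑ r ∈ Finset.range (d + 1), (n.choose r : ℝ)) *
        (2 * Real.exp (-(Q * b ^ 2 / 2)))) * ((2 : ℝ) ^ n) ^ Q ≤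
      #{X : Fin Q → Fin n → Bool | ∀ S : Finset (Fin n), S.card ≤ d →
        |∑ j, (f (X j) * walsh S (X j) - fourierCoeff f S)| < Q * b} := by
  classical
  set G : Finset (Fin Q → Fin n → Bool) := {X | ∀ S : Finset (Fin n), S.card ≤ d →
        |∑ j, (f (X j) * walsh S (X j) - fourierCoeff f S)| < Q * b} with hG
  set L : Finset (Finset (Fin n)) := {S | S.card ≤ d}
  let B : Finset (Fin n) → Finset (Fin Q → Fin n → Bool) := fun S =>
    {X | Q * b ≤ |∑ j, (f (X j) * walsh S (X j) - fourierCoeff f S)|}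
  have hcardK : (Fintype.card (Fin n → Bool) : ℝ) = 2 ^ n := by simp
  have hB : ∀ S, (#(B S) : ℝ) ≤ 2 * (((2 : ℝ) ^ n) ^ Q * Real.exp (-(Q * b ^ 2 / 2))) := by
    intro S
    have := card_abs_sum_ge_le (fun x => f x * walsh S x)
      (fun x => by rw [abs_mul, abs_walsh, mul_one]; exact hf x) Q hb
    rw [hcardK] at this
    exact this
  have hGc : Gᶜ ⊆ L.biUnion B := by
    intro X hX
    simp only [hG, Finset.mem_compl, Finset.mem_filter, Finset.mem_univ, true_and] at hX
    push Not at hX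
    obtain ⟨S, hS, hX⟩ := hX
    exact Finset.mem_biUnion.mpr ⟨S, by simpa [L] using hS, by simpa [B] using hX⟩
  have h1 : (#Gᶜ : ℝ) ≤ ∑ S ∈ L, (#(B S) : ℝ) := by
    exact_mod_cast (Finset.card_le_card hGc).trans Finset.card_biUnion_le
  have h2 : ∑ S ∈ L, (#(B S) : ℝ) ≤
      #L * (2 * (((2 : ℝ) ^ n) ^ Q * Real.exp (-(Q * b ^ 2 / 2)))) := by
    simpa using Finset.sum_le_card_nsmul L _ _ fun S _ => hB S
  have h3 : (#G : ℝ) + #Gᶜ = ((2 : ℝ) ^ n) ^ Q := by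
    rw [← Nat.cast_add, Finset.card_add_card_compl]
    simp
  rw [← card_low_degree]
  linarith

/-- **Theorem 1.2.** If every `f` in the class `F` of `[-1,1]`-valued functions has Fourier
spectrum `t`-concentrated up to degree `d` and `η`-concentrated on some family `𝒮(f)` of at most
`m` subsets, then `Q_r(F, η + t + ε, δ) ≤ ⌈(18m/ε)·log((2/δ)·Σ_{r=0}^d C(n,r))⌉`. -/
theorem stmt2 (n m d : ℕ) (hd1 : 1 ≤ d) (hdn : d ≤ n) (t η : ℝ)
    (ht0 : 0 ≤ t) (ht1 : t < 1) (hη0 : 0 ≤ η) (hη1 : η < 1)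
    (F : Set ((Fin n → Bool) → ℝ))
    (hFb : ∀ f ∈ F, Bounded1 f)
    (hFt : ∀ f ∈ F, fourierTail n d f ≤ t)
    (hFS : ∀ f ∈ F, ∃ 𝒮 : Finset (Finset (Fin n)), 𝒮.card ≤ m ∧
        ∑ S ∈ Finset.univ \ 𝒮, fourierCoeff f S ^ 2 ≤ η)
    (ε δ : ℝ) (hε0 : 0 < ε) (hε1 : ε < 1) (hδ0 : 0 < δ) (hδ1 : δ < 1) :
    ∃ (Q : ℕ) (H : (Fin Q → (Fin n → Bool) × ℝ) → ((Fin n → Bool) → ℝ)),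
      RandLearns Q H F (η + t + ε) δ ∧
      Q ≤ ⌈18 * m / ε *
            Real.log (2 / δ * ∑ r ∈ Finset.range (d + 1), (n.choose r : ℝ))⌉₊ := by
  rcases Nat.eq_zero_or_pos m with rfl | hm
  -- The bound is `0` here, and the zero hypothesis already has error at most `η`.
  · refine ⟨0, fun _ x => ∑ S, (0 : Finset (Fin n) → ℝ) S * walsh S x, ?_, Nat.zero_le _⟩
    intro f hf
    obtain ⟨𝒮, h𝒮, hη⟩ := hFS f hf
    obtain rfl : 𝒮 = ∅ := Finset.card_eq_zero.mp (Nat.le_zero.mp h𝒮)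
    have hd : dist2 (fun x => ∑ S, (0 : Finset (Fin n) → ℝ) S * walsh S x) f ≤ η + t + ε := by
      rw [dist2_sum_walsh]
      simp only [Finset.sdiff_empty] at hη
      simp only [Pi.zero_apply, zero_sub, neg_sq]
      linarith
    simp only [hd]
    simp
    exact hδ0.le
  -- The accuracy `b` is chosen so that `m * (9 * b ^ 2) = ε`.
  · set N : ℝ := ∑ r ∈ Finset.range (d + 1), (n.choose r : ℝ) with hN
    have hNpos : 0 < N := Finset.sum_pos
      (fun r hr => by
        have := Finset.mem_range.mp hr
        exact_mod_cast Nat.choose_pos (by omega)) (by simp)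
    have hm' : (0 : ℝ) < m := by exact_mod_cast hm
    set Q := ⌈18 * m / ε * Real.log (2 / δ * N)⌉₊ with hQ
    set b := Real.sqrt (ε / (9 * m)) with hbdef
    have hb0 : 0 ≤ b := Real.sqrt_nonneg _
    have hb2 : b ^ 2 = ε / (9 * m) := Real.sq_sqrt (by positivity)
    refine ⟨Q, learner d b, ?_, le_rfl⟩
    intro f hf
    obtain ⟨𝒮, h𝒮, hη⟩ := hFS f hf
    have hconf : N * (2 * Real.exp (-(Q * b ^ 2 / 2))) ≤ δ := by
      have hle : Real.log (2 / δ * N) ≤ Q * b ^ 2 / 2 := by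
        have h := Nat.le_ceil (18 * m / ε * Real.log (2 / δ * N))
        rw [← hQ] at h
        rw [hb2]
        calc Real.log (2 / δ * N)
            = (18 * m / ε * Real.log (2 / δ * N)) * (ε / (9 * m)) / 2 := by
              field_simp
              ring
          _ ≤ _ := by gcongr
      have h := (Real.exp_le_exp.mpr (neg_le_neg hle)).trans_eq
        (by rw [Real.exp_neg, Real.exp_log (by positivity)])
      calc N * (2 * Real.exp (-(Q * b ^ 2 / 2))) ≤ N * (2 * (2 / δ * N)⁻¹) := by gcongr
        _ = δ := by field_simp
    have hcount := card_good_ge d Q hb0 (hFb f hf)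
    refine le_trans ?_ (hcount.trans ?_)
    · gcongr
    · rw [Nat.card_eq_fintype_card, Fintype.card_subtype]
      refine Nat.cast_le.mpr (Finset.card_le_card fun X hX => ?_)
      simp only [Finset.mem_filter, Finset.mem_univ, true_and] at hX ⊢
      have hQpos : (0 : ℝ) < Q := by
        by_contra! hc
        have h := (abs_nonneg _).trans_lt (hX ∅ (by simp))
        nlinarith
      refine (dist2_learner_le (hFt f hf) h𝒮 hη hb0 _ fun S hS => ?_).trans_eq ?_
      · have h := hX S hS
        rw [Finset.sum_sub_distrib, Finset.sum_const, Finset.card_univ, Fintype.card_fin,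
          nsmul_eq_mul] at h
        rw [empCoeff, div_sub' hQpos.ne', abs_div, abs_of_pos hQpos, div_le_iff₀ hQpos, mul_comm b]
        exact h.le
      · rw [hb2]
        field_simp
end

section
/- Fix n ∈ ℕ and let B be a class of Boolean functions on {−1,1}^n. Then for every ε > 0 and every δ ∈ (0,1), the randomized query complexity satisfies Q_r(B, ε, δ) ≥ log₂ M(B, ‖·‖_{L₂}, 2√ε) + log₂(1−δ). Equivalently: if a random-example learning algorithm with Q queries learns B with L₂-error ε and confidence 1−δ, then 2^Q ≥ (1−δ)·M(B, ‖·‖_{L₂}, 2√ε). -/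
/-!
Fix a tuple `X` of sample points. A Boolean function shows the learner one of at most `2 ^ Q` label
patterns on `X`, and two functions with the same pattern receive the same hypothesis `h`. If `h` is
`√ε`-close to both, they are `2√ε`-close to each other, so among the elements of a `2√ε`-separated
set at most `2 ^ Q` are learned successfully from `X`. Counting the pairs `(p, X)` for which `p ∈ P`
is learned from `X`, once by `p` and once by `X`, gives
`|P| * (1 - δ) * (2 ^ n) ^ Q ≤ (2 ^ n) ^ Q * 2 ^ Q`.
-/

open Finset

open EIS

/-- The triangle inequality through a common approximant `h`. It follows pointwise from
`(a - b)² ≤ 2 (h - a)² + 2 (h - b)²`. -/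
lemma dist2_le_of_common {n : ℕ} {h p q : (Fin n → Bool) → ℝ} {ε : ℝ}
    (hp : dist2 h p ≤ ε) (hq : dist2 h q ≤ ε) : dist2 p q ≤ 4 * ε := by
  have key : dist2 p q ≤ 2 * dist2 h p + 2 * dist2 h q := by
    unfold dist2
    rw [← mul_div_assoc, ← mul_div_assoc, ← add_div, Finset.mul_sum, Finset.mul_sum,
      ← Finset.sum_add_distrib]
    gcongr with x
    nlinarith [sq_nonneg (2 * h x - p x - q x)]
  linarith

open Classical in
/-- A fixed sample tuple `X` suffices to learn at most `2 ^ Q` elements of a `2√ε`-separated set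
of Boolean functions. -/
lemma card_learned_le {n Q : ℕ} {ε : ℝ}
    (H : (Fin Q → (Fin n → Bool) × ℝ) → ((Fin n → Bool) → ℝ))
    (P : Finset ((Fin n → Bool) → ℝ)) (hP : ∀ p ∈ P, BoolValued p)
    (hsep : ∀ p ∈ P, ∀ q ∈ P, p ≠ q → 2 * Real.sqrt ε < Real.sqrt (dist2 p q))
    (X : Fin Q → Fin n → Bool) :
    (P.filter fun p => dist2 (H fun j => (X j, p (X j))) p ≤ ε).card ≤ 2 ^ Q := by
  have hcard : (Finset.univ : Finset (Fin Q → Bool)).card = 2 ^ Q := by simp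
  rw [← hcard]
  refine Finset.card_le_card_of_injOn (fun p j => decide (p (X j) = 1))
    (fun _ _ => Finset.mem_coe.2 (Finset.mem_univ _)) ?_
  intro p hp q hq hpq
  obtain ⟨hpP, hpε⟩ := Finset.mem_filter.1 (Finset.mem_coe.1 hp)
  obtain ⟨hqP, hqε⟩ := Finset.mem_filter.1 (Finset.mem_coe.1 hq)
  by_contra hne
  have hlab : ∀ j, p (X j) = q (X j) := by
    intro j
    have hj : (p (X j) = 1) ↔ (q (X j) = 1) := by simpa using congrFun hpq j
    rcases hP p hpP (X j) with h1 | h1 <;> rcases hP q hqP (X j) with h2 | h2 <;>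
      rw [h1, h2] at hj ⊢ <;> norm_num at hj
  simp only [hlab] at hpε
  have h4 := Real.sqrt_le_sqrt (dist2_le_of_common hpε hqε)
  have h2 : Real.sqrt (4 * ε) = 2 * Real.sqrt ε := by
    rw [Real.sqrt_mul (by norm_num), show (4 : ℝ) = 2 ^ 2 by norm_num,
      Real.sqrt_sq (by norm_num)]
  linarith [hsep p hpP q hqP hne]

/-- **Proposition 1.7 (randomized part).** For any class `B` of Boolean functions on the
hypercube, `Q_r(B, ε, δ) ≥ log₂ M(B, ‖·‖_{L₂}, 2√ε) + log₂(1-δ)`: if a random-example algorithm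
with `Q` queries learns `B` with L₂-error `ε` and confidence `1-δ`, then any `2√ε`-separated
subset `P` of `B` has `(1-δ)·|P| ≤ 2^Q`. -/
theorem stmt9 (n : ℕ) (B : Set ((Fin n → Bool) → ℝ)) (hB : ∀ f ∈ B, BoolValued f)
    (ε δ : ℝ) (hε : 0 < ε) (hδ0 : 0 < δ) (hδ1 : δ < 1) (Q : ℕ)
    (H : (Fin Q → (Fin n → Bool) × ℝ) → ((Fin n → Bool) → ℝ))
    (hH : RandLearns Q H B ε δ)
    (P : Finset ((Fin n → Bool) → ℝ)) (hPB : ↑P ⊆ B)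
    (hsep : ∀ p ∈ P, ∀ q ∈ P, p ≠ q → 2 * Real.sqrt ε < Real.sqrt (dist2 p q)) :
    (1 - δ) * P.card ≤ 2 ^ Q := by
  classical
  have hrow : ∀ p ∈ P, (1 - δ) * ((2 : ℝ) ^ n) ^ Q ≤
      ((Finset.univ.filter fun X : Fin Q → Fin n → Bool =>
        dist2 (H fun j => (X j, p (X j))) p ≤ ε).card : ℝ) := by
    intro p hp
    have h := hH p (hPB hp)
    rwa [Nat.card_eq_fintype_card, Fintype.card_subtype] at h
  have hcol := card_learned_le H P (fun p hp => hB p (hPB hp)) hsep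
  have hswap := Finset.sum_card_bipartiteAbove_eq_sum_card_bipartiteBelow
    (s := P) (t := (Finset.univ : Finset (Fin Q → Fin n → Bool)))
    (fun p X => dist2 (H fun j => (X j, p (X j))) p ≤ ε)
  have hle : ∑ p ∈ P, (Finset.univ.filter fun X : Fin Q → Fin n → Bool =>
      dist2 (H fun j => (X j, p (X j))) p ≤ ε).card ≤ (2 ^ n) ^ Q * 2 ^ Q := by
    refine hswap.le.trans ((Finset.sum_le_card_nsmul _ _ _ fun X _ => hcol X).trans ?_)
    simp
  have hle' : ∑ p ∈ P, ((Finset.univ.filter fun X : Fin Q → Fin n → Bool =>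
      dist2 (H fun j => (X j, p (X j))) p ≤ ε).card : ℝ) ≤ (2 ^ n) ^ Q * 2 ^ Q := by
    exact_mod_cast hle
  have hge := Finset.card_nsmul_le_sum P _ _ hrow
  rw [nsmul_eq_mul] at hge
  have hpos : (0 : ℝ) < (2 ^ n) ^ Q := by positivity
  refine le_of_mul_le_mul_left ?_ hpos
  linarith
end

section
/- There exist a universal constant C > 0 and, for every d ∈ ℕ and ε ∈ (0,1), a constant κ(d,ε) > 0 depending only on d and ε, such that for every n ∈ ℕ and every d ∈ {1,…,n} the covering number of F_{n,d} satisfies log₂ N(F_{n,d}, ‖·‖_{L₂}, ε) ≤ (2^{Cd}/ε⁴)·log n + κ(d,ε). -/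
/-!
Bounded functions of degree at most `d` are close to juntas. Write `L_i f = ∑_{S ∋ i} f̂(S) w_S`.
For a point `x` and a set `A` of coordinates, `∑_{i ∈ A} L_i f(x)` is the derivative at `u = 1` of
the polynomial obtained from the multilinear extension of `f` by scaling the coordinates of `x` in
`A` by `u`. This polynomial has degree at most `d` and is bounded by `1` on `[-1, 1]`, so by Markov's
inequality at the endpoint the derivative is at most `d²` in absolute value; splitting according to
the sign of `L_i f(x)` gives `∑_i |L_i f(x)| ≤ 2d²` (`sum_abs_lap_le`).

Hypercontractivity (`bonami`, `sqrt_Ex_sq_le`) gives `‖L_i f‖₂ ≤ 3^d ‖L_i f‖₁`, hence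
`∑_i Inf_i(f)^{1/2} ≤ M := 2 d² 3^d`. Discarding the coordinates with `Inf_i(f)^{1/2} < τ` costs
Fourier weight at most `τ M`, and at most `M / τ` coordinates remain (`exists_junta`).
With `τ M = ε² / 8` this leaves `k = O(9^d d⁴ / ε²)` coordinates.

The cover is obtained by recording, for each `f`, a map `Fin k → Fin n` whose range contains these
coordinates, and rounded values of the Fourier coefficients on the subsets of the range. By Parseval,
functions with the same label are at distance at most `ε`, and there are at most `n ^ k` maps, while
the number of rounded coefficient vectors depends on `d` and `ε` only.
-/


open Finset

namespace EIS

/-- The real sign encoded by a bit: `true ↦ 1`, `false ↦ -1`. -/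
noncomputable def sgn (b : Bool) : ℝ := if b then 1 else -1

/-- Expectation with respect to the uniform measure on the hypercube. -/
noncomputable def Ex {n : ℕ} (f : (Fin n → Bool) → ℝ) : ℝ := (∑ x, f x) / 2 ^ n

/-- The point obtained from `x` by flipping the `i`-th coordinate. -/
def flip {n : ℕ} (i : Fin n) (x : Fin n → Bool) : Fin n → Bool := Function.update x i (!x i)

/-- The Walsh polynomial `∑_{S ⊆ V} a_S w_S` in the variables indexed by `V`. -/
noncomputable def wpoly {n : ℕ} (V : Finset (Fin n)) (a : Finset (Fin n) → ℝ)
    (x : Fin n → Bool) : ℝ := ∑ S ∈ V.powerset, a S * walsh S x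

/-! ### Expectations -/

section Expectation
variable {n : ℕ}

lemma sgn_sq (b : Bool) : sgn b ^ 2 = 1 := by cases b <;> simp [sgn]

lemma abs_sgn (b : Bool) : |sgn b| = 1 := by cases b <;> simp [sgn]

lemma walsh_eq (S : Finset (Fin n)) (x : Fin n → Bool) : walsh S x = ∏ i ∈ S, sgn (x i) := rfl

lemma Ex_add (f g : (Fin n → Bool) → ℝ) : Ex (fun x => f x + g x) = Ex f + Ex g := by
  simp [Ex, Finset.sum_add_distrib, add_div]

lemma Ex_smul (c : ℝ) (f : (Fin n → Bool) → ℝ) : Ex (fun x => c * f x) = c * Ex f := by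
  simp [Ex, ← Finset.mul_sum, mul_div_assoc]

lemma Ex_sum {ι : Type*} (s : Finset ι) (f : ι → (Fin n → Bool) → ℝ) :
    Ex (fun x => ∑ i ∈ s, f i x) = ∑ i ∈ s, Ex (f i) := by
  simp only [Ex]
  rw [Finset.sum_comm, Finset.sum_div]

lemma Ex_mono {f g : (Fin n → Bool) → ℝ} (h : ∀ x, f x ≤ g x) : Ex f ≤ Ex g := by
  unfold Ex
  gcongr
  exact h _

lemma Ex_const (c : ℝ) : Ex (fun _ : Fin n → Bool => c) = c := by
  simp [Ex]

lemma Ex_nonneg {f : (Fin n → Bool) → ℝ} (h : ∀ x, 0 ≤ f x) : 0 ≤ Ex f := by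
  rw [← Ex_const (n := n) 0]
  exact Ex_mono h

lemma Ex_mul_sq_le (f g : (Fin n → Bool) → ℝ) :
    Ex (fun x => f x * g x) ^ 2 ≤ Ex (fun x => f x ^ 2) * Ex (fun x => g x ^ 2) := by
  unfold Ex
  rw [div_pow, div_mul_div_comm, sq ((2 : ℝ) ^ n)]
  gcongr
  exact Finset.sum_mul_sq_le_sq_mul_sq _ _ _

lemma flip_flip (i : Fin n) (x : Fin n → Bool) : flip i (flip i x) = x := by
  simp [flip]

lemma flip_same (i : Fin n) (x : Fin n → Bool) : flip i x i = !x i := by simp [flip]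

lemma Ex_flip (i : Fin n) (f : (Fin n → Bool) → ℝ) : Ex (fun x => f (flip i x)) = Ex f := by
  unfold Ex
  congr 1
  exact Equiv.sum_comp (Function.Involutive.toPerm (flip i) (flip_flip i)) f

/-- If `G` does not depend on the `i`-th coordinate, then `E[x_i G] = 0`. -/
lemma Ex_sgn_mul (i : Fin n) (G : (Fin n → Bool) → ℝ) (hG : ∀ x, G (flip i x) = G x) :
    Ex (fun x => sgn (x i) * G x) = 0 := by
  have h := Ex_flip i (fun x => sgn (x i) * G x)
  have h2 : (fun x => sgn (flip i x i) * G (flip i x)) = fun x => (-1) * (sgn (x i) * G x) := by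
    funext x
    rw [hG, flip_same]
    cases x i <;> simp [sgn]
  rw [h2, Ex_smul] at h
  linarith

lemma wpoly_flip {V : Finset (Fin n)} {i : Fin n} (hi : i ∉ V) (a : Finset (Fin n) → ℝ)
    (x : Fin n → Bool) : wpoly V a (flip i x) = wpoly V a x := by
  unfold wpoly
  refine Finset.sum_congr rfl fun S hS => ?_
  congr 1
  rw [walsh_eq, walsh_eq]
  refine Finset.prod_congr rfl fun j hj => ?_
  have : j ≠ i := by
    rintro rfl
    exact hi (Finset.mem_powerset.1 hS hj)
  simp [flip, this]

lemma wpoly_insert {V : Finset (Fin n)} {i : Fin n} (hi : i ∉ V) (a : Finset (Fin n) → ℝ)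
    (x : Fin n → Bool) :
    wpoly (insert i V) a x
      = wpoly V a x + sgn (x i) * wpoly V (fun S => a (insert i S)) x := by
  unfold wpoly
  rw [Finset.sum_powerset_insert hi, Finset.mul_sum]
  congr 1
  refine Finset.sum_congr rfl fun S hS => ?_
  have : i ∉ S := fun h => hi (Finset.mem_powerset.1 hS h)
  rw [walsh_eq, walsh_eq, Finset.prod_insert this]
  ring

/-- Second moment of `g + x_i h` when `g` and `h` do not depend on `x_i`. -/
lemma Ex_sq_split (i : Fin n) (g h : (Fin n → Bool) → ℝ)
    (hg : ∀ x, g (flip i x) = g x) (hh : ∀ x, h (flip i x) = h x) :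
    Ex (fun x => (g x + sgn (x i) * h x) ^ 2)
      = Ex (fun x => g x ^ 2) + Ex (fun x => h x ^ 2) := by
  have e : (fun x => (g x + sgn (x i) * h x) ^ 2)
      = fun x => (g x ^ 2 + h x ^ 2) + sgn (x i) * (2 * g x * h x) := by
    funext x
    linear_combination h x ^ 2 * sgn_sq (x i)
  rw [e, Ex_add, Ex_add, Ex_sgn_mul i _ (by simp [hg, hh]), add_zero]

/-- Fourth moment of `g + x_i h` when `g` and `h` do not depend on `x_i`. -/
lemma Ex_four_split (i : Fin n) (g h : (Fin n → Bool) → ℝ)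
    (hg : ∀ x, g (flip i x) = g x) (hh : ∀ x, h (flip i x) = h x) :
    Ex (fun x => (g x + sgn (x i) * h x) ^ 4)
      = Ex (fun x => g x ^ 4) + 6 * Ex (fun x => g x ^ 2 * h x ^ 2) + Ex (fun x => h x ^ 4) := by
  have e : (fun x => (g x + sgn (x i) * h x) ^ 4)
      = fun x => (g x ^ 4 + 6 * (g x ^ 2 * h x ^ 2) + h x ^ 4)
          + sgn (x i) * (4 * g x ^ 3 * h x + 4 * g x * h x ^ 3) := by
    funext x
    linear_combination (6 * g x ^ 2 * h x ^ 2 + 4 * g x * h x ^ 3 * sgn (x i)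
      + h x ^ 4 * (sgn (x i) ^ 2 + 1)) * sgn_sq (x i)
  rw [e, Ex_add, Ex_add, Ex_add, Ex_smul, Ex_sgn_mul i _ (by simp [hg, hh]), add_zero]

lemma parseval (V : Finset (Fin n)) : ∀ a : Finset (Fin n) → ℝ,
    Ex (fun x => wpoly V a x ^ 2) = ∑ S ∈ V.powerset, a S ^ 2 := by
  induction V using Finset.induction_on with
  | empty =>
    intro a
    simp [wpoly, walsh, Ex_const]
  | insert i V hi ih =>
    intro a
    simp_rw [wpoly_insert hi]
    rw [Ex_sq_split i _ _ (wpoly_flip hi _) (wpoly_flip hi _), ih, ih,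
      Finset.sum_powerset_insert hi]

/-! ### Hypercontractivity -/

/-- Bonami's lemma `‖g‖₄ ≤ 3^{d/2} ‖g‖₂` for Walsh polynomials of degree at most `d`. -/
lemma bonami (V : Finset (Fin n)) : ∀ (d : ℕ) (a : Finset (Fin n) → ℝ),
    (∀ S, d < S.card → a S = 0) →
    Ex (fun x => wpoly V a x ^ 4) ≤ 9 ^ d * Ex (fun x => wpoly V a x ^ 2) ^ 2 := by
  induction V using Finset.induction_on with
  | empty =>
    intro d a _
    simp only [wpoly, Finset.powerset_empty, Finset.sum_singleton, walsh, Finset.prod_empty,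
      Ex_const, mul_one]
    have h1 : (1 : ℝ) ≤ 9 ^ d := one_le_pow₀ (by norm_num)
    nlinarith [sq_nonneg (a ∅ ^ 2)]
  | insert i V hi ih =>
    intro d a ha
    simp_rw [wpoly_insert hi]
    -- Only the sets `S` avoiding `i` matter in `h`; zeroing out the others gives a genuine
    -- coefficient function of degree at most `d - 1`.
    set b : Finset (Fin n) → ℝ := fun S => if i ∈ S then 0 else a (insert i S) with hb
    have hab : ∀ x, wpoly V (fun S => a (insert i S)) x = wpoly V b x := by
      intro x
      refine Finset.sum_congr rfl fun S hS => ?_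
      have : i ∉ S := fun h => hi (Finset.mem_powerset.1 hS h)
      simp [hb, this]
    simp_rw [hab]
    rw [Ex_sq_split i _ _ (wpoly_flip hi _) (wpoly_flip hi _),
      Ex_four_split i _ _ (wpoly_flip hi _) (wpoly_flip hi _)]
    have hG := ih d a ha
    set G4 := Ex (fun x => wpoly V a x ^ 4)
    set G2 := Ex (fun x => wpoly V a x ^ 2)
    cases d with
    | zero =>
      have hb0 : ∀ x, wpoly V b x = 0 := by
        intro x
        refine Finset.sum_eq_zero fun S _ => ?_
        by_cases h : i ∈ S
        · simp [hb, h]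
        · simp only [hb, h, if_false]
          rw [ha _ (Finset.card_pos.2 (Finset.insert_nonempty _ _)), zero_mul]
      simp only [hb0]
      simpa [Ex_const] using hG
    | succ e =>
      have hH := ih e b (by
        intro S hS
        by_cases h : i ∈ S
        · simp [hb, h]
        · simp only [hb, h, if_false]
          apply ha
          rw [Finset.card_insert_of_notMem h]
          omega)
      have hm := Ex_mul_sq_le (fun x => wpoly V a x ^ 2) (fun x => wpoly V b x ^ 2)
      simp only [← pow_mul] at hm
      norm_num only at hm
      have hH4 : 0 ≤ Ex (fun x => wpoly V b x ^ 4) := Ex_nonneg fun x => by positivity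
      have hG4 : 0 ≤ G4 := Ex_nonneg fun x => by positivity
      have hG2 : 0 ≤ G2 := Ex_nonneg fun x => by positivity
      have hH2 : 0 ≤ Ex (fun x => wpoly V b x ^ 2) := Ex_nonneg fun x => by positivity
      set H4 := Ex (fun x => wpoly V b x ^ 4)
      set H2 := Ex (fun x => wpoly V b x ^ 2)
      set m := Ex (fun x => wpoly V a x ^ 2 * wpoly V b x ^ 2)
      have hp : (0 : ℝ) < 9 ^ e := by positivity
      have hmm : m ≤ 3 * 9 ^ e * (G2 * H2) := by
        refine abs_le_of_sq_le_sq' ?_ (by positivity) |>.2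
        calc m ^ 2 ≤ G4 * H4 := hm
          _ ≤ (9 ^ (e + 1) * G2 ^ 2) * (9 ^ e * H2 ^ 2) := by gcongr
          _ = _ := by ring
      have h9 : (9 : ℝ) ^ (e + 1) = 9 * 9 ^ e := by ring
      rw [h9] at hG ⊢
      nlinarith [mul_nonneg hp.le (sq_nonneg H2)]

/-- Hypercontractivity in the form `‖g‖₂ ≤ 3^d ‖g‖₁`, obtained by interpolating `‖g‖₂` between
`‖g‖₁` and `‖g‖₄`. -/
lemma sqrt_Ex_sq_le (V : Finset (Fin n)) (d : ℕ) (a : Finset (Fin n) → ℝ)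
    (ha : ∀ S, d < S.card → a S = 0) :
    √(Ex (fun x => wpoly V a x ^ 2)) ≤ 3 ^ d * Ex (fun x => |wpoly V a x|) := by
  have hB := bonami V d a ha
  have h1 := Ex_mul_sq_le (fun x => √|wpoly V a x|) (fun x => √|wpoly V a x| * |wpoly V a x|)
  have h2 := Ex_mul_sq_le (fun x => |wpoly V a x|) (fun x => |wpoly V a x| ^ 2)
  have e1 : ∀ x, √|wpoly V a x| * (√|wpoly V a x| * |wpoly V a x|) = wpoly V a x ^ 2 := by
    intro x
    rw [← mul_assoc, Real.mul_self_sqrt (abs_nonneg _), abs_mul_abs_self, sq]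
  have e2 : ∀ x, √|wpoly V a x| ^ 2 = |wpoly V a x| := fun x => Real.sq_sqrt (abs_nonneg _)
  have e3 : ∀ x, (√|wpoly V a x| * |wpoly V a x|) ^ 2 = |wpoly V a x| * |wpoly V a x| ^ 2 := by
    intro x
    rw [mul_pow, e2]
  have e4 : ∀ x, (|wpoly V a x| ^ 2) ^ 2 = wpoly V a x ^ 4 := by
    intro x
    rw [sq_abs, ← pow_mul]
  simp only [e1, e2, e3] at h1
  simp only [e4] at h2
  simp only [sq_abs] at h2
  simp only [sq_abs] at h1
  have p1 : 0 ≤ Ex (fun x => |wpoly V a x|) := Ex_nonneg fun x => by positivity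
  have p2 : 0 ≤ Ex (fun x => wpoly V a x ^ 2) := Ex_nonneg fun x => by positivity
  have p3 : 0 ≤ Ex (fun x => |wpoly V a x| * wpoly V a x ^ 2) := Ex_nonneg fun x => by positivity
  set A := Ex (fun x => |wpoly V a x|)
  set B := Ex (fun x => wpoly V a x ^ 2)
  set T := Ex (fun x => |wpoly V a x| * wpoly V a x ^ 2)
  set Q := Ex (fun x => wpoly V a x ^ 4)
  rw [Real.sqrt_le_left (by positivity)]
  rcases p2.eq_or_lt with h0 | hpos
  · rw [← h0]
    positivity
  · have h4 : B ^ 4 ≤ (9 ^ d * A ^ 2) * B ^ 3 := by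
      calc B ^ 4 = (B ^ 2) ^ 2 := by ring
        _ ≤ (A * T) ^ 2 := by gcongr
        _ = A ^ 2 * T ^ 2 := by ring
        _ ≤ A ^ 2 * (B * Q) := by gcongr
        _ ≤ A ^ 2 * (B * (9 ^ d * B ^ 2)) := by gcongr
        _ = _ := by ring
    have h5 : B * B ^ 3 ≤ (9 ^ d * A ^ 2) * B ^ 3 := by
      calc B * B ^ 3 = B ^ 4 := by ring
        _ ≤ _ := h4
    have h6 := le_of_mul_le_mul_right h5 (by positivity)
    rw [mul_pow, ← pow_mul, mul_comm d 2, pow_mul]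
    norm_num only
    exact h6

/-! ### Multilinear extension and Markov's inequality -/

/-- The multilinear extension of `f`, written as a Poisson-type integral of the values of `f`. -/
lemma multilinear_eq (f : (Fin n → Bool) → ℝ) (y : Fin n → ℝ) :
    ∑ S : Finset (Fin n), fourierCoeff f S * ∏ i ∈ S, y i
      = (∑ z, f z * ∏ i, (1 + sgn (z i) * y i)) / 2 ^ n := by
  simp_rw [Finset.prod_one_add, Finset.powerset_univ, fourierCoeff, Finset.mul_sum,
    div_mul_eq_mul_div, ← Finset.sum_div, Finset.sum_mul]
  rw [Finset.sum_comm]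
  congr 1
  refine Finset.sum_congr rfl fun z _ => Finset.sum_congr rfl fun S _ => ?_
  rw [Finset.prod_mul_distrib, walsh_eq]
  ring

lemma sum_kernel (y : Fin n → ℝ) :
    ∑ z : Fin n → Bool, ∏ i, (1 + sgn (z i) * y i) = 2 ^ n := by
  have h := Finset.prod_univ_sum (fun _ : Fin n => (Finset.univ : Finset Bool))
    (fun i b => 1 + sgn b * y i)
  rw [Fintype.piFinset_univ] at h
  rw [← h]
  simp only [Fintype.sum_bool, sgn]
  rw [Finset.prod_congr rfl (g := fun _ => (2 : ℝ)) (fun i _ => by norm_num; ring)]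
  simp

lemma abs_multilinear_le {f : (Fin n → Bool) → ℝ} (hf : Bounded1 f) {y : Fin n → ℝ}
    (hy : ∀ i, |y i| ≤ 1) :
    |∑ S : Finset (Fin n), fourierCoeff f S * ∏ i ∈ S, y i| ≤ 1 := by
  rw [multilinear_eq, abs_div, abs_of_pos (by positivity : (0 : ℝ) < 2 ^ n),
    div_le_one (by positivity)]
  refine (Finset.abs_sum_le_sum_abs _ _).trans ?_
  rw [← sum_kernel y]
  refine Finset.sum_le_sum fun z _ => ?_
  have hk : 0 ≤ ∏ i, (1 + sgn (z i) * y i) := by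
    refine Finset.prod_nonneg fun i _ => ?_
    have : |sgn (z i) * y i| ≤ 1 := by
      rw [abs_mul, abs_sgn, one_mul]
      exact hy i
    linarith [(abs_le.1 this).1]
  rw [abs_mul, abs_of_nonneg hk]
  exact mul_le_of_le_one_left hk (hf z)

/-- Fourier inversion. -/
lemma wpoly_fourierCoeff (f : (Fin n → Bool) → ℝ) (x : Fin n → Bool) :
    wpoly Finset.univ (fourierCoeff f) x = f x := by
  have h := multilinear_eq f (fun i => sgn (x i))
  simp only [wpoly, Finset.powerset_univ, walsh_eq]
  rw [h, Finset.sum_eq_single x]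
  · have : ∀ i, 1 + sgn (x i) * sgn (x i) = 2 := by
      intro i
      rw [← sq, sgn_sq]
      norm_num
    simp [this]
  · intro z _ hz
    obtain ⟨i, hi⟩ := Function.ne_iff.1 hz
    rw [Finset.prod_eq_zero (Finset.mem_univ i), mul_zero]
    cases h1 : z i <;> cases h2 : x i <;> simp_all [sgn]
  · simp

lemma sum_fourierCoeff_sq_le {f : (Fin n → Bool) → ℝ} (hf : Bounded1 f) :
    ∑ S, fourierCoeff f S ^ 2 ≤ 1 := by
  have h := parseval Finset.univ (fourierCoeff f)
  simp only [wpoly_fourierCoeff, Finset.powerset_univ] at h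
  rw [← h, ← Ex_const (n := n) 1]
  exact Ex_mono fun x => (sq_le_one_iff_abs_le_one _).2 (hf x)

lemma abs_fourierCoeff_le {f : (Fin n → Bool) → ℝ} (hf : Bounded1 f) (S : Finset (Fin n)) :
    |fourierCoeff f S| ≤ 1 := by
  rw [← sq_le_one_iff_abs_le_one]
  exact (Finset.single_le_sum (f := fun S => fourierCoeff f S ^ 2) (fun _ _ => sq_nonneg _)
    (Finset.mem_univ S)).trans (sum_fourierCoeff_sq_le hf)

/-- `L_i f = ∑_{S ∋ i} f̂(S) w_S`, which is `x_i` times the `i`-th discrete derivative of `f`. -/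
noncomputable def lap (f : (Fin n → Bool) → ℝ) (i : Fin n) : (Fin n → Bool) → ℝ :=
  wpoly Finset.univ (fun S => if i ∈ S then fourierCoeff f S else 0)

open Polynomial in
/-- Partial sums of the `L_i f(x)` are bounded by `d²`: such a sum is the derivative at `u = 1` of
the polynomial obtained by scaling the coordinates in `A` by `u` in the multilinear extension, so
Markov's inequality at the endpoint applies. -/
lemma abs_sum_lap_le {d : ℕ} {f : (Fin n → Bool) → ℝ} (hf : f ∈ Fclass n d)
    (A : Finset (Fin n)) (x : Fin n → Bool) : |∑ i ∈ A, lap f i x| ≤ (d : ℝ) ^ 2 := by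
  obtain ⟨hb, hd⟩ := hf
  set P : ℝ[X] := ∑ S : Finset (Fin n), C (fourierCoeff f S * walsh S x) * X ^ (S ∩ A).card with hP
  have hdeg : P.degree ≤ d := by
    rw [← mem_degreeLE]
    refine Submodule.sum_mem _ fun S _ => mem_degreeLE.2 ?_
    by_cases h : d < S.card
    · simp [hd S h]
    · refine (degree_C_mul_X_pow_le _ _).trans ?_
      have := Finset.card_le_card (Finset.inter_subset_left (s₁ := S) (s₂ := A))
      exact_mod_cast this.trans (not_lt.1 h)
  have hbd : ∀ u ∈ Set.Icc (-1 : ℝ) 1, |P.eval u| ≤ 1 := by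
    intro u hu
    have h := abs_multilinear_le hb (y := fun i => sgn (x i) * (if i ∈ A then u else 1)) (by
      intro i
      rw [abs_mul, abs_sgn, one_mul]
      split_ifs
      · exact abs_le.2 hu
      · simp)
    convert h using 2
    rw [hP, eval_finsetSum]
    refine Finset.sum_congr rfl fun S _ => ?_
    rw [Finset.prod_mul_distrib, ← walsh_eq, Finset.prod_ite, Finset.prod_const_one, mul_one,
      Finset.prod_const, Finset.filter_mem_eq_inter]
    simp [mul_assoc]
  have hder : (derivative P).eval 1 = ∑ i ∈ A, lap f i x := by
    simp only [hP, derivative_sum, eval_finsetSum, lap, wpoly, Finset.powerset_univ]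
    rw [Finset.sum_comm]
    refine Finset.sum_congr rfl fun S _ => ?_
    simp only [derivative_C_mul, derivative_X_pow, eval_mul, eval_C, eval_pow, eval_X, one_pow,
      mul_one, ite_mul, zero_mul, Finset.sum_ite_mem, Finset.sum_const, nsmul_eq_mul,
      Finset.inter_comm A S]
    ring
  have hT : (derivative (Chebyshev.T ℝ d)).eval 1 = (d : ℝ) ^ 2 := by
    rw [Chebyshev.T_derivative_eq_U]
    simp [sq]
  have h1 := Chebyshev.eval_iterate_derivative_le_of_forall_abs_le_one (k := 1) le_rfl hdeg hbd
  have h2 := Chebyshev.eval_iterate_derivative_le_of_forall_abs_le_one (P := -P) (k := 1) le_rfl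
    (by rwa [degree_neg]) (by simpa using hbd)
  simp only [Function.iterate_one, hT, derivative_neg, eval_neg, hder] at h1 h2
  exact abs_le.2 ⟨by linarith, h1⟩

/-- The pointwise bound `∑_i |L_i f(x)| ≤ 2d²`. -/
lemma sum_abs_lap_le {d : ℕ} {f : (Fin n → Bool) → ℝ} (hf : f ∈ Fclass n d)
    (x : Fin n → Bool) : ∑ i, |lap f i x| ≤ 2 * (d : ℝ) ^ 2 := by
  rw [← Finset.sum_filter_add_sum_filter_not Finset.univ (fun i => 0 ≤ lap f i x)]
  have h1 := abs_sum_lap_le hf (Finset.univ.filter fun i => 0 ≤ lap f i x) x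
  have h2 := abs_sum_lap_le hf (Finset.univ.filter fun i => ¬ 0 ≤ lap f i x) x
  rw [Finset.sum_congr rfl (g := fun i => lap f i x)
    (fun i hi => abs_of_nonneg (Finset.mem_filter.1 hi).2),
    Finset.sum_congr (s₁ := Finset.univ.filter fun i => ¬ 0 ≤ lap f i x) rfl
      (g := fun i => -lap f i x)
      (fun i hi => abs_of_neg (not_le.1 (Finset.mem_filter.1 hi).2)), Finset.sum_neg_distrib]
  linarith [(abs_le.1 h1).2, (abs_le.1 h2).1]

/-! ### Approximation by juntas -/

/-- The influence `Inf_i f = ∑_{S ∋ i} f̂(S)²`. -/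
noncomputable def infl (f : (Fin n → Bool) → ℝ) (i : Fin n) : ℝ :=
  ∑ S : Finset (Fin n), if i ∈ S then fourierCoeff f S ^ 2 else 0

lemma infl_nonneg (f : (Fin n → Bool) → ℝ) (i : Fin n) : 0 ≤ infl f i :=
  Finset.sum_nonneg fun S _ => by split_ifs <;> positivity

lemma infl_eq (f : (Fin n → Bool) → ℝ) (i : Fin n) : infl f i = Ex (fun x => lap f i x ^ 2) := by
  simp only [lap, parseval, infl, Finset.powerset_univ, ite_pow]
  simp

lemma sum_sqrt_infl_le {d : ℕ} {f : (Fin n → Bool) → ℝ} (hf : f ∈ Fclass n d) :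
    ∑ i, √(infl f i) ≤ 3 ^ d * (2 * (d : ℝ) ^ 2) := by
  calc ∑ i, √(infl f i) ≤ ∑ i, 3 ^ d * Ex (fun x => |lap f i x|) := by
        refine Finset.sum_le_sum fun i _ => ?_
        rw [infl_eq]
        refine sqrt_Ex_sq_le _ d _ fun S hS => ?_
        simp [hf.2 S hS]
    _ = 3 ^ d * Ex (fun x => ∑ i, |lap f i x|) := by rw [← Finset.mul_sum, Ex_sum]
    _ ≤ 3 ^ d * Ex (fun _ : Fin n → Bool => 2 * (d : ℝ) ^ 2) := by
        gcongr
        exact Ex_mono (sum_abs_lap_le hf)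
    _ = _ := by rw [Ex_const]

/-- Junta theorem: outside a set `J` of at most `M / τ` coordinates the Fourier weight of `f` is at
most `τ M`, where `M = 2 d² 3^d`. The set `J` consists of the coordinates of influence at least
`τ²`. -/
lemma exists_junta {d : ℕ} {f : (Fin n → Bool) → ℝ} (hf : f ∈ Fclass n d) {τ : ℝ} (hτ : 0 < τ) :
    ∃ J : Finset (Fin n), J.card * τ ≤ 3 ^ d * (2 * (d : ℝ) ^ 2) ∧
      ∑ S ∈ Finset.univ.filter (fun S => ¬ S ⊆ J), fourierCoeff f S ^ 2
        ≤ τ * (3 ^ d * (2 * (d : ℝ) ^ 2)) := by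
  have hs := sum_sqrt_infl_le hf
  set J := Finset.univ.filter fun i => τ ≤ √(infl f i) with hJ
  refine ⟨J, ?_, ?_⟩
  · calc J.card * τ = ∑ i ∈ J, τ := by simp
      _ ≤ ∑ i ∈ J, √(infl f i) := Finset.sum_le_sum fun i hi => (Finset.mem_filter.1 hi).2
      _ ≤ ∑ i, √(infl f i) :=
        Finset.sum_le_sum_of_subset_of_nonneg (Finset.subset_univ _) fun _ _ _ => Real.sqrt_nonneg _
      _ ≤ _ := hs
  · calc ∑ S ∈ Finset.univ.filter (fun S => ¬ S ⊆ J), fourierCoeff f S ^ 2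
        ≤ ∑ S : Finset (Fin n), ∑ i ∈ Jᶜ, if i ∈ S then fourierCoeff f S ^ 2 else 0 := by
          rw [Finset.sum_filter]
          refine Finset.sum_le_sum fun S _ => ?_
          have hnn : ∀ i ∈ Jᶜ, 0 ≤ if i ∈ S then fourierCoeff f S ^ 2 else 0 := fun i _ => by
            split_ifs <;> positivity
          split_ifs with h
          · exact Finset.sum_nonneg hnn
          · obtain ⟨i, hi, hiJ⟩ := Finset.not_subset.1 h
            have := Finset.single_le_sum hnn (Finset.mem_compl.2 hiJ)
            simpa [hi] using this
      _ = ∑ i ∈ Jᶜ, infl f i := by rw [Finset.sum_comm]; rfl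
      _ ≤ ∑ i ∈ Jᶜ, τ * √(infl f i) := by
          refine Finset.sum_le_sum fun i hi => ?_
          have : √(infl f i) ≤ τ := by
            simp only [hJ, Finset.mem_compl, Finset.mem_filter, Finset.mem_univ, true_and,
              not_le] at hi
            exact hi.le
          nth_rewrite 1 [← Real.mul_self_sqrt (infl_nonneg f i)]
          gcongr
      _ ≤ ∑ i, τ * √(infl f i) :=
        Finset.sum_le_sum_of_subset_of_nonneg (Finset.subset_univ _) fun _ _ _ => by positivity
      _ = τ * ∑ i, √(infl f i) := by rw [Finset.mul_sum]
      _ ≤ _ := by gcongr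

/-! ### Covering numbers -/

lemma dist2_eq (f g : (Fin n → Bool) → ℝ) :
    dist2 f g = ∑ S, (fourierCoeff f S - fourierCoeff g S) ^ 2 := by
  have h := parseval Finset.univ (fun S => fourierCoeff f S - fourierCoeff g S)
  rw [Finset.powerset_univ] at h
  rw [← h, dist2, Ex]
  congr 1
  refine Finset.sum_congr rfl fun x _ => ?_
  rw [← wpoly_fourierCoeff f x, ← wpoly_fourierCoeff g x]
  simp [wpoly, sub_mul, Finset.sum_sub_distrib]

/-- Choosing one representative per nonempty label class covers `F` up to equality of labels. -/
lemma exists_cover_of_labels {α L : Type*} [Fintype L] (F : Set α) (R : α → L → Prop)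
    (h : ∀ f ∈ F, ∃ l, R f l) :
    ∃ Cov : Finset α, ↑Cov ⊆ F ∧ Cov.card ≤ Fintype.card L ∧
      ∀ f ∈ F, ∃ c ∈ Cov, ∃ l, R f l ∧ R c l := by
  classical
  let D : Finset L := Finset.univ.filter fun l => ∃ f ∈ F, R f l
  have hD : ∀ l : D, ∃ f ∈ F, R f l := fun l => (Finset.mem_filter.1 l.2).2
  choose rep hrF hrR using hD
  refine ⟨Finset.univ.image rep, ?_, ?_, ?_⟩
  · intro f hf
    obtain ⟨l, _, rfl⟩ := Finset.mem_image.1 (Finset.mem_coe.1 hf)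
    exact hrF l
  · refine Finset.card_image_le.trans ?_
    rw [Finset.card_univ, Fintype.card_coe]
    exact Finset.card_le_univ _
  · intro f hf
    obtain ⟨l, hl⟩ := h f hf
    have hlD : l ∈ D := Finset.mem_filter.2 ⟨Finset.mem_univ _, f, hf, hl⟩
    exact ⟨rep ⟨l, hlD⟩, Finset.mem_image_of_mem _ (Finset.mem_univ _), l, hl, hrR ⟨l, hlD⟩⟩

/-- `IsLabel η δ f (φ, c)` says that `f` has Fourier weight at most `η` on the sets not contained in
the range of `φ`, and that `c` records, rounded to multiples of `δ`, the Fourier coefficients of `f`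
on the sets contained in the range of `φ`. -/
def IsLabel {k m : ℕ} (η δ : ℝ) (f : (Fin n → Bool) → ℝ)
    (l : (Fin k → Fin n) × (Finset (Fin k) → Fin m)) : Prop :=
  ∑ S ∈ Finset.univ.filter (fun S => ¬ S ⊆ Finset.univ.image l.1), fourierCoeff f S ^ 2 ≤ η ∧
    ∀ T, (l.2 T : ℕ) = ⌊(fourierCoeff f (T.image l.1) + 1) / δ⌋₊

lemma abs_sub_le_of_floor_eq {a b δ : ℝ} (hδ : 0 < δ) (ha : |a| ≤ 1) (hb : |b| ≤ 1)
    (h : ⌊(a + 1) / δ⌋₊ = ⌊(b + 1) / δ⌋₊) : |a - b| ≤ δ := by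
  have ha0 : 0 ≤ (a + 1) / δ := div_nonneg (by linarith [(abs_le.1 ha).1]) hδ.le
  have hb0 : 0 ≤ (b + 1) / δ := div_nonneg (by linarith [(abs_le.1 hb).1]) hδ.le
  have h1 := Nat.floor_le ha0
  have h2 := Nat.lt_floor_add_one ((a + 1) / δ)
  have h3 := Nat.floor_le hb0
  have h4 := Nat.lt_floor_add_one ((b + 1) / δ)
  rw [h] at h1 h2
  have h5 : |(a + 1) / δ - (b + 1) / δ| ≤ 1 := abs_le.2 ⟨by linarith, by linarith⟩
  rw [← sub_div, abs_div, abs_of_pos hδ, div_le_one hδ] at h5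
  simpa using h5

lemma dist2_le_of_isLabel {k m : ℕ} {η δ : ℝ} (hδ : 0 < δ) {f g : (Fin n → Bool) → ℝ}
    (hf : Bounded1 f) (hg : Bounded1 g) {l : (Fin k → Fin n) × (Finset (Fin k) → Fin m)}
    (hlf : IsLabel η δ f l) (hlg : IsLabel η δ g l) : dist2 f g ≤ 2 ^ k * δ ^ 2 + 4 * η := by
  rw [dist2_eq, ← Finset.sum_filter_add_sum_filter_not Finset.univ
    (fun S => S ⊆ Finset.univ.image l.1)]
  have h1 : ∑ S ∈ Finset.univ.filter (fun S => S ⊆ Finset.univ.image l.1),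
      (fourierCoeff f S - fourierCoeff g S) ^ 2 ≤ 2 ^ k * δ ^ 2 := by
    have hcard : (Finset.univ.filter (fun S => S ⊆ Finset.univ.image l.1)).card ≤ 2 ^ k := by
      have : Finset.univ.filter (fun S => S ⊆ Finset.univ.image l.1)
          = (Finset.univ.image l.1).powerset := by ext; simp
      rw [this, Finset.card_powerset]
      refine Nat.pow_le_pow_right (by norm_num) ?_
      simpa using Finset.card_image_le (s := Finset.univ) (f := l.1)
    calc _ ≤ ∑ S ∈ Finset.univ.filter (fun S => S ⊆ Finset.univ.image l.1), δ ^ 2 := by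
          refine Finset.sum_le_sum fun S hS => ?_
          obtain ⟨T, -, rfl⟩ := Finset.subset_image_iff.1 (Finset.mem_filter.1 hS).2
          rw [← sq_abs]
          gcongr
          exact abs_sub_le_of_floor_eq hδ (abs_fourierCoeff_le hf _) (abs_fourierCoeff_le hg _)
            ((hlf.2 T).symm.trans (hlg.2 T))
      _ ≤ _ := by
          rw [Finset.sum_const, nsmul_eq_mul]
          gcongr
          exact_mod_cast hcard
  have h2 : ∑ S ∈ Finset.univ.filter (fun S => ¬ S ⊆ Finset.univ.image l.1),
      (fourierCoeff f S - fourierCoeff g S) ^ 2 ≤ 4 * η := by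
    calc _ ≤ ∑ S ∈ Finset.univ.filter (fun S => ¬ S ⊆ Finset.univ.image l.1),
          (2 * fourierCoeff f S ^ 2 + 2 * fourierCoeff g S ^ 2) := by
          refine Finset.sum_le_sum fun S _ => ?_
          nlinarith [sq_nonneg (fourierCoeff f S + fourierCoeff g S)]
      _ ≤ _ := by
          rw [Finset.sum_add_distrib, ← Finset.mul_sum, ← Finset.mul_sum]
          linarith [hlf.1, hlg.1]
  linarith

lemma exists_isLabel {d k m : ℕ} (hn : 0 < n) {δ τ : ℝ} (hδ : 0 < δ) (hτ : 0 < τ)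
    (hk : 3 ^ d * (2 * (d : ℝ) ^ 2) / τ < k + 1) (hm : 2 / δ < m)
    {f : (Fin n → Bool) → ℝ} (hf : f ∈ Fclass n d) :
    ∃ l : (Fin k → Fin n) × (Finset (Fin k) → Fin m),
      IsLabel (τ * (3 ^ d * (2 * (d : ℝ) ^ 2))) δ f l := by
  obtain ⟨J, hJ, hw⟩ := exists_junta hf hτ
  have hJk : J.card ≤ k := by
    rw [← le_div_iff₀ hτ] at hJ
    have : (J.card : ℝ) < k + 1 := hJ.trans_lt hk
    exact Nat.lt_succ_iff.1 (by exact_mod_cast this)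
  let φ : Fin k → Fin n := fun i =>
    if h : (i : ℕ) < J.card then J.equivFin.symm ⟨i, h⟩ else ⟨0, hn⟩
  have hφ : J ⊆ Finset.univ.image φ := by
    intro j hj
    have hlt := (J.equivFin ⟨j, hj⟩).2
    refine Finset.mem_image.2 ⟨⟨J.equivFin ⟨j, hj⟩, hlt.trans_le hJk⟩, Finset.mem_univ _, ?_⟩
    simp [φ]
  have hfl : ∀ T : Finset (Fin k), ⌊(fourierCoeff f (T.image φ) + 1) / δ⌋₊ < m := by
    intro T
    have ha := abs_le.1 (abs_fourierCoeff_le hf.1 (T.image φ))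
    rw [Nat.floor_lt (div_nonneg (by linarith) hδ.le)]
    refine lt_of_le_of_lt ?_ hm
    gcongr
    linarith
  refine ⟨(φ, fun T => ⟨_, hfl T⟩), ?_, fun T => rfl⟩
  refine le_trans (Finset.sum_le_sum_of_subset_of_nonneg ?_ fun _ _ _ => sq_nonneg _) hw
  intro S hS
  rw [Finset.mem_filter] at hS ⊢
  exact ⟨hS.1, fun h => hS.2 (h.trans hφ)⟩

end Expectation

/-- The number of coordinates of the approximating junta. -/
noncomputable def juntaSize (d : ℕ) (ε : ℝ) : ℕ := ⌊32 * 9 ^ d * (d : ℝ) ^ 4 / ε ^ 2⌋₊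

/-- The mesh used for rounding Fourier coefficients. -/
noncomputable def mesh (d : ℕ) (ε : ℝ) : ℝ := ε / 2 ^ (juntaSize d ε + 1)

/-- The number of values of a rounded Fourier coefficient. -/
noncomputable def numValues (d : ℕ) (ε : ℝ) : ℕ := ⌊2 / mesh d ε⌋₊ + 1

lemma exists_cover {n d : ℕ} (hd : 1 ≤ d) (hdn : d ≤ n) {ε : ℝ} (hε : 0 < ε) :
    ∃ Cov : Finset ((Fin n → Bool) → ℝ), ↑Cov ⊆ Fclass n d ∧
      (∀ f ∈ Fclass n d, ∃ c ∈ Cov, √(dist2 f c) ≤ ε) ∧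
      Cov.card ≤ n ^ juntaSize d ε * numValues d ε ^ 2 ^ juntaSize d ε := by
  have hδ : 0 < mesh d ε := by unfold mesh; positivity
  have hd0 : (0 : ℝ) < d := by exact_mod_cast hd
  set M : ℝ := 3 ^ d * (2 * (d : ℝ) ^ 2) with hM
  have hM0 : 0 < M := by positivity
  -- With this threshold the discarded Fourier weight `τ * M` is `ε² / 8`.
  set τ : ℝ := ε ^ 2 / (8 * M) with hτ
  have hτ0 : 0 < τ := by positivity
  have hk : M / τ < juntaSize d ε + 1 := by
    have : M / τ = 32 * 9 ^ d * (d : ℝ) ^ 4 / ε ^ 2 := by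
      have h9 : (9 : ℝ) ^ d = 3 ^ d * 3 ^ d := by rw [← mul_pow]; norm_num
      rw [hτ, h9, div_div_eq_mul_div, hM]
      ring
    rw [this]
    exact Nat.lt_floor_add_one _
  have hm : 2 / mesh d ε < numValues d ε := by
    unfold numValues
    exact_mod_cast Nat.lt_floor_add_one _
  obtain ⟨Cov, hsub, hcard, hcov⟩ := exists_cover_of_labels (Fclass n d)
    (IsLabel (k := juntaSize d ε) (m := numValues d ε) (τ * M) (mesh d ε))
    (fun f hf => exists_isLabel (hd.trans hdn) hδ hτ0 hk hm hf)
  refine ⟨Cov, hsub, fun f hf => ?_, ?_⟩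
  · obtain ⟨c, hc, l, hlf, hlc⟩ := hcov f hf
    refine ⟨c, hc, ?_⟩
    rw [Real.sqrt_le_left hε.le]
    refine (dist2_le_of_isLabel hδ hf.1 (hsub hc).1 hlf hlc).trans ?_
    have h1 : τ * M = ε ^ 2 / 8 := by
      rw [hτ]
      field_simp
    have h2 : 2 ^ juntaSize d ε * mesh d ε ^ 2 ≤ ε ^ 2 / 4 := by
      unfold mesh
      have hp : (1 : ℝ) ≤ 2 ^ juntaSize d ε := one_le_pow₀ (by norm_num)
      rw [div_pow, pow_succ (2 : ℝ), mul_pow, mul_div_assoc',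
        div_le_div_iff₀ (by positivity) (by norm_num)]
      have : 0 ≤ 4 * ε ^ 2 * 2 ^ juntaSize d ε * ((2 : ℝ) ^ juntaSize d ε - 1) :=
        mul_nonneg (by positivity) (by linarith)
      nlinarith
    rw [h1]
    linarith [sq_nonneg ε]
  · simpa using hcard

lemma rpow_bound {n d : ℕ} (hd : 1 ≤ d) (hdn : d ≤ n) {ε : ℝ} (hε : 0 < ε) (hε1 : ε < 1) :
    (n : ℝ) ^ juntaSize d ε ≤ (2 : ℝ) ^ ((2 : ℝ) ^ ((14 : ℝ) * d) / ε ^ 4 * Real.log n) := by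
  have hn : (1 : ℝ) ≤ n := by exact_mod_cast hd.trans hdn
  have hlog : 0 ≤ Real.log n := Real.log_nonneg hn
  have hl2 : (1 / 2 : ℝ) ≤ Real.log 2 := by linarith [Real.log_two_gt_d9]
  have hk : (juntaSize d ε : ℝ) ≤ 32 * 9 ^ d * (d : ℝ) ^ 4 / ε ^ 2 :=
    Nat.floor_le (by positivity)
  -- The universal constant: `64 · 9^d · d⁴ ≤ 2^{6d} · 2^{4d} · 2^{4d}`.
  have hC : 64 * 9 ^ d * (d : ℝ) ^ 4 ≤ (2 : ℝ) ^ ((14 : ℝ) * d) := by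
    have e : (2 : ℝ) ^ ((14 : ℝ) * d) = 64 ^ d * 16 ^ d * ((2 : ℝ) ^ d) ^ 4 := by
      rw [Real.rpow_mul (by norm_num), Real.rpow_natCast, ← pow_mul, mul_comm d 4, pow_mul,
        ← mul_pow, ← mul_pow]
      norm_num
    rw [e]
    have h1 : (64 : ℝ) ≤ 64 ^ d := le_self_pow₀ (by norm_num) (by omega)
    have h2 : (d : ℝ) ≤ 2 ^ d := by exact_mod_cast Nat.lt_two_pow_self.le
    gcongr
    norm_num
  have hε4 : ε ^ 4 ≤ ε ^ 2 := pow_le_pow_of_le_one hε.le hε1.le (by norm_num)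
  have hX : 2 * (juntaSize d ε : ℝ) ≤ (2 : ℝ) ^ ((14 : ℝ) * d) / ε ^ 4 := by
    calc 2 * (juntaSize d ε : ℝ) ≤ 2 * (32 * 9 ^ d * (d : ℝ) ^ 4 / ε ^ 2) := by gcongr
      _ = 64 * 9 ^ d * (d : ℝ) ^ 4 / ε ^ 2 := by ring
      _ ≤ (2 : ℝ) ^ ((14 : ℝ) * d) / ε ^ 4 := by gcongr
  rw [← Real.log_le_log_iff (by positivity) (by positivity), Real.log_pow,
    Real.log_rpow (by norm_num)]
  set X := (2 : ℝ) ^ ((14 : ℝ) * d) / ε ^ 4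
  have hk0 : (0 : ℝ) ≤ juntaSize d ε := Nat.cast_nonneg _
  calc (juntaSize d ε : ℝ) * Real.log n ≤ (X * (1 / 2)) * Real.log n := by gcongr; linarith
    _ ≤ (X * Real.log 2) * Real.log n := by
        have : 0 ≤ X := by linarith
        gcongr
    _ = _ := by ring

end EIS

open EIS

/-- **Theorem 1.8, upper bound (1.15).** There are a universal constant `C > 0` and constants
`κ(d,ε) > 0` such that `log₂ N(F_{n,d}, ‖·‖_{L₂}, ε) ≤ (2^{Cd}/ε⁴)·log n + κ(d,ε)`: there is a
subset `Cov ⊆ F_{n,d}` of cardinality at most `2^{(2^{Cd}/ε⁴)·log n + κ(d,ε)}` such that every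
`f ∈ F_{n,d}` is within L₂-distance `ε` of some member of `Cov`. -/
theorem stmt12 :
    ∃ C : ℝ, 0 < C ∧ ∃ κ : ℕ → ℝ → ℝ,
      (∀ (d : ℕ) (ε : ℝ), 0 < ε → ε < 1 → 0 < κ d ε) ∧
      ∀ (n d : ℕ), 1 ≤ d → d ≤ n → ∀ ε : ℝ, 0 < ε → ε < 1 →
        ∃ Cov : Finset ((Fin n → Bool) → ℝ), ↑Cov ⊆ Fclass n d ∧
          (∀ f ∈ Fclass n d, ∃ c ∈ Cov, Real.sqrt (dist2 f c) ≤ ε) ∧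
          (Cov.card : ℝ) ≤
            (2 : ℝ) ^ ((2 : ℝ) ^ (C * d) / ε ^ 4 * Real.log n + κ d ε) := by
  refine ⟨14, by norm_num,
    fun d ε => 2 ^ juntaSize d ε * Real.logb 2 (numValues d ε) + 1, ?_, ?_⟩
  · intro d ε _ _
    have h : (1 : ℝ) ≤ numValues d ε := by
      unfold numValues
      exact_mod_cast Nat.le_add_left 1 _
    have := Real.logb_nonneg (by norm_num : (1 : ℝ) < 2) h
    positivity
  · intro n d hd hdn ε hε hε1
    obtain ⟨Cov, hsub, hcov, hcard⟩ := exists_cover hd hdn hε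
    refine ⟨Cov, hsub, hcov, ?_⟩
    have hm : (0 : ℝ) < numValues d ε := by
      unfold numValues
      exact_mod_cast Nat.succ_pos _
    have h2 : (numValues d ε : ℝ) ^ 2 ^ juntaSize d ε
        ≤ (2 : ℝ) ^ (2 ^ juntaSize d ε * Real.logb 2 (numValues d ε) + 1) := by
      calc (numValues d ε : ℝ) ^ 2 ^ juntaSize d ε
          = (2 : ℝ) ^ (2 ^ juntaSize d ε * Real.logb 2 (numValues d ε)) := by
            rw [mul_comm, Real.rpow_mul (by norm_num), Real.rpow_logb (by norm_num) (by norm_num) hm]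
            rw [← Real.rpow_natCast, Nat.cast_pow, Nat.cast_ofNat]
        _ ≤ _ := Real.rpow_le_rpow_of_exponent_le (by norm_num) (by linarith)
    rw [Real.rpow_add (by norm_num)]
    calc (Cov.card : ℝ)
        ≤ (n : ℝ) ^ juntaSize d ε * (numValues d ε : ℝ) ^ 2 ^ juntaSize d ε := by
          exact_mod_cast hcard
      _ ≤ _ := by
          gcongr
          exact rpow_bound hd hdn hε hε1
end

section
/- Fix m, k ∈ ℕ with k < m and ε ∈ (0,1). Then there exist an integer t ≥ (2k)^{−k/2}·m^{(1−ε)k/2} and subsets σ₁,…,σ_t ⊂ {1,…,m}, each of cardinality k, such that |σ_i ∩ σ_j| < (1−ε)·k for all i ≠ j ∈ {1,…,t}. -/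
/-!
The proof is a Gilbert–Varshamov argument. Put `s = ⌈(1 - ε) k⌉`, so that an intersection has size
`< (1 - ε) k` exactly when it has fewer than `s` elements. Take a family `F` of `k`-subsets
of an `m`-set, maximal among those with pairwise intersections of size `< s`. By maximality each
`k`-set shares an `s`-subset with some member of `F`; counting these gives
`C(m,k) ≤ |F| C(k,s) C(m-s,k-s)` (`exists_family`). As `C(m,k) C(k,s) = C(m,s) C(m-s,k-s)`, this
reads `C(m,s) ≤ |F| C(k,s)²`, and `C(m,s) / C(k,s) ≥ (m/k)^s` together with `C(k,s) ≤ 2^k` yields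
`m^s ≤ |F| (2k)^k` (`pow_le_of_choose_le`). Since `|F| ≤ |F|²`, taking square roots gives the bound.
-/

open Finset

open EIS

/-- At most `C(m-s, k-s)` of the `k`-subsets of an `m`-set contain a given `s`-subset. -/
lemma card_superset_le {m k s : ℕ} (ρ : Finset (Fin m)) (hρ : ρ.card = s) :
    ((powersetCard k (univ : Finset (Fin m))).filter (fun τ => ρ ⊆ τ)).card
      ≤ (m - s).choose (k - s) := by
  have h : (powersetCard (k - s) (univ \ ρ)).card = (m - s).choose (k - s) := by
    rw [card_powersetCard, card_sdiff_of_subset (subset_univ _), card_univ, Fintype.card_fin, hρ]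
  rw [← h]
  apply card_le_card_of_injOn (fun τ => τ \ ρ)
  · intro τ hτ
    simp only [coe_filter, mem_powersetCard, Set.mem_ofPred_eq] at hτ
    simp only [mem_coe, mem_powersetCard]
    refine ⟨sdiff_subset_sdiff (subset_univ _) le_rfl, ?_⟩
    rw [card_sdiff_of_subset hτ.2, hτ.1.2, hρ]
  · intro τ hτ τ' hτ' h
    simp only [coe_filter, mem_powersetCard, Set.mem_ofPred_eq] at hτ hτ'
    rw [← sdiff_union_of_subset hτ.2, ← sdiff_union_of_subset hτ'.2]
    simp only at h
    rw [h]

/-- Gilbert–Varshamov bound: a maximal family of `k`-sets with pairwise intersections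
of size `< s` is large. -/
lemma exists_family (m k s : ℕ) (hs : s ≤ k) :
    ∃ F : Finset (Finset (Fin m)), (∀ σ ∈ F, σ.card = k) ∧
      (∀ σ ∈ F, ∀ τ ∈ F, σ ≠ τ → (σ ∩ τ).card < s) ∧
      m.choose k ≤ F.card * (k.choose s * (m - s).choose (k - s)) := by
  classical
  let P : Finset (Finset (Finset (Fin m))) := univ.filter fun F =>
    (∀ σ ∈ F, σ.card = k) ∧ ∀ σ ∈ F, ∀ τ ∈ F, σ ≠ τ → (σ ∩ τ).card < s
  obtain ⟨F, hF, hmax⟩ := exists_max_image P card ⟨∅, by simp [P]⟩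
  simp only [P, mem_filter, mem_univ, true_and] at hF hmax
  refine ⟨F, hF.1, hF.2, ?_⟩
  have hclose : ∀ τ : Finset (Fin m), τ.card = k → ∃ σ ∈ F, s ≤ (σ ∩ τ).card := by
    intro τ hτ
    by_contra! hcon
    have hnot : τ ∉ F := fun h => by
      have := hcon τ h
      rw [inter_self] at this
      omega
    have := hmax (insert τ F) ⟨?_, ?_⟩
    · rw [card_insert_of_notMem hnot] at this
      omega
    · intro σ hσ
      rcases mem_insert.1 hσ with rfl | h
      · exact hτ
      · exact hF.1 σ h
    · intro σ hσ σ' hσ' hne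
      rcases mem_insert.1 hσ with rfl | h <;> rcases mem_insert.1 hσ' with rfl | h'
      · exact absurd rfl hne
      · rw [inter_comm]
        exact hcon σ' h'
      · exact hcon σ h
      · exact hF.2 σ h σ' h' hne
  have hcover : powersetCard k (univ : Finset (Fin m)) ⊆ F.biUnion fun σ =>
      (powersetCard s σ).biUnion fun ρ => (powersetCard k univ).filter fun τ => ρ ⊆ τ := by
    intro τ hτ
    obtain ⟨σ, hσ, hle⟩ := hclose τ (mem_powersetCard.1 hτ).2
    obtain ⟨ρ, hρ, hρs⟩ := exists_subset_card_eq hle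
    simp only [mem_biUnion, mem_filter]
    exact ⟨σ, hσ, ρ, mem_powersetCard.2 ⟨hρ.trans inter_subset_left, hρs⟩, hτ,
      hρ.trans inter_subset_right⟩
  calc m.choose k = (powersetCard k (univ : Finset (Fin m))).card := by simp
    _ ≤ _ := card_le_card hcover
    _ ≤ _ := card_biUnion_le_card_mul _ _ _ fun σ hσ => by
      have hc : (powersetCard s σ).card = k.choose s := by rw [card_powersetCard, hF.1 σ hσ]
      rw [← hc]
      exact card_biUnion_le_card_mul _ _ _ fun ρ hρ =>
        card_superset_le ρ (mem_powersetCard.1 hρ).2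

/-- The estimate `C(m,s) / C(k,s) ≥ (m/k)^s`, cleared of denominators. -/
lemma pow_mul_choose_le (m k : ℕ) (hkm : k ≤ m) (s : ℕ) (hs : s ≤ k) :
    m ^ s * k.choose s ≤ k ^ s * m.choose s := by
  induction s with
  | zero => simp
  | succ s ih =>
    have ih := ih (by omega)
    have h1 := Nat.choose_succ_right_eq m s
    have h2 := Nat.choose_succ_right_eq k s
    have h3 : m * (k - s) ≤ k * (m - s) := by
      rw [Nat.mul_sub, Nat.mul_sub, mul_comm m k]
      exact Nat.sub_le_sub_left (Nat.mul_le_mul_right s hkm) _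
    refine Nat.le_of_mul_le_mul_right ?_ (Nat.succ_pos s)
    calc m ^ (s + 1) * k.choose (s + 1) * (s + 1)
        = m ^ (s + 1) * (k.choose (s + 1) * (s + 1)) := by ring
      _ = (m ^ s * k.choose s) * (m * (k - s)) := by rw [h2]; ring
      _ ≤ (k ^ s * m.choose s) * (k * (m - s)) := Nat.mul_le_mul ih h3
      _ = k ^ (s + 1) * (m.choose (s + 1) * (s + 1)) := by rw [h1]; ring
      _ = k ^ (s + 1) * m.choose (s + 1) * (s + 1) := by ring

lemma pow_le_of_choose_le {m k s t : ℕ} (hkm : k ≤ m) (hs : s ≤ k)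
    (h : m.choose k ≤ t * (k.choose s * (m - s).choose (k - s))) :
    m ^ s ≤ t * (2 * k) ^ k := by
  have hA : 0 < k.choose s := Nat.choose_pos hs
  have hB : 0 < (m - s).choose (k - s) := Nat.choose_pos (by omega)
  have hmul : m.choose k * k.choose s = m.choose s * (m - s).choose (k - s) :=
    Nat.choose_mul hs
  have h1 : m.choose s ≤ t * k.choose s * k.choose s := by
    refine Nat.le_of_mul_le_mul_right ?_ hB
    rw [← hmul]
    calc m.choose k * k.choose s
        ≤ t * (k.choose s * (m - s).choose (k - s)) * k.choose s := Nat.mul_le_mul_right _ h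
      _ = _ := by ring
  have h2 : m ^ s ≤ t * k ^ s * k.choose s := by
    refine Nat.le_of_mul_le_mul_right ?_ hA
    calc m ^ s * k.choose s ≤ k ^ s * m.choose s := pow_mul_choose_le m k hkm s hs
      _ ≤ k ^ s * (t * k.choose s * k.choose s) := Nat.mul_le_mul_left _ h1
      _ = _ := by ring
  have h3 : k ^ s ≤ k ^ k := by
    rcases Nat.eq_zero_or_pos k with rfl | hk
    · simp [Nat.le_zero.1 hs]
    · exact Nat.pow_le_pow_right hk hs
  calc m ^ s ≤ t * k ^ s * k.choose s := h2
    _ ≤ t * k ^ k * 2 ^ k :=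
      Nat.mul_le_mul (Nat.mul_le_mul_left _ h3) (Nat.choose_le_two_pow k s)
    _ = _ := by rw [mul_pow]; ring

/-- **Lemma 2.1.** For `m, k ∈ ℕ` with `k < m` and `ε ∈ (0,1)`, there exist
`t ≥ (2k)^{-k/2}·m^{(1-ε)k/2}` and distinct subsets `σ₁, …, σ_t ⊆ {1,…,m}`, each of
cardinality `k`, with `|σ_i ∩ σ_j| < (1-ε)·k` for all `i ≠ j`. -/
theorem stmt13 (m k : ℕ) (hk : k < m) (ε : ℝ) (hε0 : 0 < ε) (hε1 : ε < 1) :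
    ∃ t : ℕ,
      (2 * (k : ℝ)) ^ (-(k : ℝ) / 2) * (m : ℝ) ^ ((1 - ε) * k / 2) ≤ (t : ℝ) ∧
      ∃ σ : Fin t → Finset (Fin m), Function.Injective σ ∧
        (∀ i, (σ i).card = k) ∧
        ∀ i j, i ≠ j → ((σ i ∩ σ j).card : ℝ) < (1 - ε) * k := by
  have hx : (1 - ε) * k ≤ k := by nlinarith [(Nat.cast_nonneg k : (0 : ℝ) ≤ k)]
  have hs : ⌈(1 - ε) * k⌉₊ ≤ k := Nat.ceil_le.2 hx
  obtain ⟨F, hFk, hFi, hFc⟩ := exists_family m k ⌈(1 - ε) * k⌉₊ hs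
  have hbound := pow_le_of_choose_le hk.le hs hFc
  refine ⟨F.card, ?_, fun i => (F.equivFin.symm i : Finset (Fin m)),
    Subtype.val_injective.comp F.equivFin.symm.injective,
    fun i => hFk _ (F.equivFin.symm i).2, fun i j hij => ?_⟩
  · have hm1 : (1 : ℝ) ≤ m := by exact_mod_cast (by omega : 1 ≤ m)
    -- In the case `k = 0` this is the positivity of `0 ^ 0 = 1`.
    have hpos : (0 : ℝ) < (2 * (k : ℝ)) ^ k := by
      rcases Nat.eq_zero_or_pos k with rfl | hk0
      · simp
      · positivity
    have hreal : (m : ℝ) ^ ⌈(1 - ε) * k⌉₊ ≤ F.card * (2 * (k : ℝ)) ^ k := by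
      exact_mod_cast hbound
    have hm : (m : ℝ) ^ ((1 - ε) * k) ≤ F.card * (2 * (k : ℝ)) ^ k := by
      refine le_trans ?_ hreal
      rw [← Real.rpow_natCast]
      exact Real.rpow_le_rpow_of_exponent_le hm1 (Nat.le_ceil _)
    have hsq : ((2 * (k : ℝ)) ^ (-(k : ℝ) / 2) * (m : ℝ) ^ ((1 - ε) * k / 2)) ^ 2
        = ((2 * (k : ℝ)) ^ k)⁻¹ * (m : ℝ) ^ ((1 - ε) * k) := by
      rw [mul_pow, ← Real.rpow_mul_natCast (by positivity), ← Real.rpow_mul_natCast (by positivity)]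
      rw [← Real.rpow_natCast _ k, ← Real.rpow_neg (by positivity)]
      congr 2 <;> push_cast <;> ring
    refine (sq_le_sq₀ (by positivity) (Nat.cast_nonneg _)).1 ?_
    rw [hsq]
    calc ((2 * (k : ℝ)) ^ k)⁻¹ * (m : ℝ) ^ ((1 - ε) * k) ≤ F.card := by
          rw [inv_mul_le_iff₀ hpos, mul_comm _ (F.card : ℝ)]
          exact hm
      _ ≤ (F.card : ℝ) ^ 2 := by exact_mod_cast Nat.le_self_pow two_ne_zero _
  · have hne : (F.equivFin.symm i : Finset (Fin m)) ≠ F.equivFin.symm j := fun h =>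
      hij (F.equivFin.symm.injective (Subtype.ext h))
    exact Nat.lt_ceil.1 (hFi _ (F.equivFin.symm i).2 _ (F.equivFin.symm j).2 hne)
end

section
/- For every n ∈ ℕ and d ∈ {1,…,n}, the deterministic query complexity of exactly learning F_{n,d} equals Q(F_{n,d}, 0) = Σ_{j=0}^{d} C(n,j). That is: there is a deterministic adaptive algorithm using Σ_{j=0}^{d} C(n,j) queries which, for every f ∈ F_{n,d}, outputs a hypothesis h with ‖h − f‖²_{L₂} = 0 (i.e. h = f); and no deterministic adaptive algorithm using fewer queries achieves this for all f ∈ F_{n,d}. -/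
/-!
The Walsh functions `w_S` with `|S| ≤ d` span the space of functions of degree at most `d`, whose
dimension is `N = ∑_{j ≤ d} C(n,j)`; both bounds come from comparing queries with this dimension.

Upper bound: the `N` points with at most `d` coordinates equal to `1` determine a function of
degree at most `d`. Indeed, for `|T| > d ≥ |S|`, pairing `U` with `U ∪ {i}` for some `i ∈ T \ S`
shows that the alternating sum of `w_S` over the points of `U ⊆ T` vanishes
(`sum_powerset_walsh`), so by Fourier inversion the value of `f` at `T` is a combination of its
values at proper subsets of `T`, and induction applies (`eq_zero_of_degLE`). Hence it suffices to
query these points and to output any member of the class that is consistent with the answers.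

Lower bound: run the algorithm on `0`. Vanishing at the `Q` points queried, together with the
`2^n - N` equations that say that the degree is at most `d`, is a homogeneous linear system in the
`2^n` values of a function, so for `Q < N` it has a nonzero solution, which can be scaled into
`[-1,1]`. The algorithm cannot distinguish this solution from `0`.
-/

open Finset

open EIS

namespace EIS

/-! ### Walsh expansion and the uniqueness set -/

/-- The point of the hypercube whose coordinates equal to `1` (encoded by `true`) are exactly
those in `U`. -/
def ind {n : ℕ} (U : Finset (Fin n)) : Fin n → Bool := fun i => decide (i ∈ U)

lemma ind_filter {n : ℕ} (x : Fin n → Bool) : ind (univ.filter fun i => x i = true) = x := by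
  funext i
  simp [ind]

/-- Completeness of the Walsh system: expanding `∏ i, (1 + x i * y i)` gives the left-hand side,
and the product has a zero factor as soon as `x` and `y` differ somewhere. -/
lemma sum_walsh_mul_walsh {n : ℕ} (x y : Fin n → Bool) :
    ∑ S : Finset (Fin n), walsh S x * walsh S y = if x = y then 2 ^ n else 0 := by
  have h : ∑ S : Finset (Fin n), walsh S x * walsh S y =
      ∏ i, (1 + (if x i then (1 : ℝ) else -1) * (if y i then (1 : ℝ) else -1)) := by
    rw [Finset.prod_one_add, Finset.powerset_univ]
    exact Finset.sum_congr rfl fun S _ => Finset.prod_mul_distrib.symm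
  rw [h]
  split_ifs with hxy
  · subst hxy
    have : ∀ i, (1 + (if x i then (1 : ℝ) else -1) * (if x i then (1 : ℝ) else -1)) = 2 := by
      intro i
      split_ifs <;> norm_num
    rw [Finset.prod_congr rfl fun i _ => this i]
    simp
  · obtain ⟨i, hi⟩ := Function.ne_iff.mp hxy
    refine Finset.prod_eq_zero (Finset.mem_univ i) ?_
    cases hx : x i <;> cases hy : y i <;> simp_all

lemma fourier_inversion {n : ℕ} (f : (Fin n → Bool) → ℝ) (x : Fin n → Bool) :
    f x = ∑ S : Finset (Fin n), fourierCoeff f S * walsh S x := by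
  have h : ∑ S : Finset (Fin n), fourierCoeff f S * walsh S x =
      (∑ y, f y * ∑ S : Finset (Fin n), walsh S y * walsh S x) / 2 ^ n := by
    simp only [fourierCoeff, div_mul_eq_mul_div, Finset.sum_mul, Finset.mul_sum, ← Finset.sum_div]
    rw [Finset.sum_comm]
    simp only [mul_assoc]
  rw [h]
  simp [sum_walsh_mul_walsh]

lemma walsh_ind_insert {n : ℕ} {S U : Finset (Fin n)} {i : Fin n} (hi : i ∉ S) :
    walsh S (ind (insert i U)) = walsh S (ind U) := by
  refine Finset.prod_congr rfl fun j hj => ?_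
  have : j ≠ i := fun h => hi (h ▸ hj)
  simp [ind, this]

/-- A Walsh function not involving some `i ∈ T` is annihilated by the alternating sum over the
subsets of `T`. -/
lemma sum_powerset_walsh {n : ℕ} {S T : Finset (Fin n)} {i : Fin n} (hi : i ∉ S) (hT : i ∈ T) :
    ∑ U ∈ T.powerset, (-1 : ℝ) ^ U.card * walsh S (ind U) = 0 := by
  rw [← Finset.insert_erase hT, Finset.sum_powerset_insert (Finset.notMem_erase i T),
    ← Finset.sum_add_distrib]
  refine Finset.sum_eq_zero fun U hU => ?_
  have hU' : i ∉ U := fun h => Finset.notMem_erase i T (Finset.mem_powerset.mp hU h)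
  rw [walsh_ind_insert hi, Finset.card_insert_of_notMem hU', pow_succ]
  ring

lemma sum_powerset_of_degLE {n d : ℕ} {f : (Fin n → Bool) → ℝ} (hf : DegLE n d f)
    {T : Finset (Fin n)} (hT : d < T.card) :
    ∑ U ∈ T.powerset, (-1 : ℝ) ^ U.card * f (ind U) = 0 := by
  simp_rw [fourier_inversion f, Finset.mul_sum]
  rw [Finset.sum_comm]
  refine Finset.sum_eq_zero fun S _ => ?_
  by_cases hS : d < S.card
  · simp [hf S hS]
  · obtain ⟨i, hiT, hiS⟩ := Finset.exists_mem_notMem_of_card_lt_card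
      (lt_of_le_of_lt (not_lt.mp hS) hT)
    simp_rw [mul_left_comm _ (fourierCoeff f S), ← Finset.mul_sum]
    rw [sum_powerset_walsh hiS hiT, mul_zero]

/-- The points with at most `d` coordinates equal to `1` form a uniqueness set for functions of
degree at most `d`. -/
lemma eq_zero_of_degLE {n d : ℕ} {f : (Fin n → Bool) → ℝ} (hf : DegLE n d f)
    (h0 : ∀ U : Finset (Fin n), U.card ≤ d → f (ind U) = 0) (x : Fin n → Bool) : f x = 0 := by
  rw [← ind_filter x]
  generalize (univ.filter fun i => x i = true) = T
  induction T using Finset.strongInduction with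
  | H T ih =>
    by_cases hT : T.card ≤ d
    · exact h0 T hT
    · have h := sum_powerset_of_degLE hf (not_le.mp hT)
      rw [Finset.sum_eq_single_of_mem T (Finset.mem_powerset_self T)] at h
      · simpa using h
      · intro U hU hne
        rw [ih U ((Finset.mem_powerset.mp hU).ssubset_of_ne hne), mul_zero]

lemma fourierCoeff_sub {n : ℕ} (f g : (Fin n → Bool) → ℝ) (S : Finset (Fin n)) :
    fourierCoeff (fun x => f x - g x) S = fourierCoeff f S - fourierCoeff g S := by
  simp [fourierCoeff, sub_mul, sub_div]

lemma eq_of_dist2_le_zero {n : ℕ} {f g : (Fin n → Bool) → ℝ} (h : dist2 f g ≤ 0) : f = g := by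
  have hs : ∑ x : Fin n → Bool, (f x - g x) ^ 2 ≤ 0 := by
    by_contra! hc
    exact absurd h (not_le.mpr (div_pos hc (by positivity)))
  have h0 := (Finset.sum_eq_zero_iff_of_nonneg fun x _ => sq_nonneg (f x - g x)).mp
    (le_antisymm hs (Finset.sum_nonneg fun x _ => sq_nonneg _))
  funext x
  exact sub_eq_zero.mp (pow_eq_zero_iff two_ne_zero |>.mp (h0 x (Finset.mem_univ x)))

/-! ### Number of low-degree Walsh functions -/

/-- The family of sets of size at most `d`. -/
def lowSets (n d : ℕ) : Finset (Finset (Fin n)) := univ.filter fun S => S.card ≤ d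

lemma card_lowSets (n d : ℕ) :
    (lowSets n d).card = ∑ j ∈ Finset.range (d + 1), n.choose j := by
  rw [Finset.card_eq_sum_card_fiberwise (f := Finset.card) (t := Finset.range (d + 1))]
  · refine Finset.sum_congr rfl fun j hj => ?_
    have hj' := Finset.mem_range.mp hj
    have : (lowSets n d).filter (fun S => S.card = j) = Finset.powersetCard j univ := by
      ext S
      simp only [lowSets, Finset.mem_filter, Finset.mem_univ, true_and, Finset.mem_powersetCard,
        Finset.subset_univ]
      omega
    rw [this, Finset.card_powersetCard, Finset.card_univ, Fintype.card_fin]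
  · intro S hS
    simp only [lowSets, Finset.coe_filter, Finset.mem_univ, true_and, Set.mem_ofPred_eq] at hS
    simp only [Finset.coe_range, Set.mem_Iio]
    omega

/-! ### Runs of adaptive algorithms -/

lemma length_runHist {n : ℕ} (A : DetAlgo n) (f : (Fin n → Bool) → ℝ) (q : ℕ) :
    (runHist A f q).length = q := by
  induction q with
  | zero => rfl
  | succ q ih => simp [runHist, ih]

lemma mem_runHist {n : ℕ} {A : DetAlgo n} {f : (Fin n → Bool) → ℝ} {Q : ℕ}
    {p : (Fin n → Bool) × ℝ} :
    p ∈ runHist A f Q ↔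
      ∃ i < Q, p = (A.query (runHist A f i), f (A.query (runHist A f i))) := by
  induction Q with
  | zero => simp [runHist]
  | succ q ih =>
    simp only [runHist, List.mem_append, ih, List.mem_singleton, Nat.lt_succ_iff_lt_or_eq]
    constructor
    · rintro (⟨i, hi, h⟩ | h)
      · exact ⟨i, Or.inl hi, h⟩
      · exact ⟨q, Or.inr rfl, h⟩
    · rintro ⟨i, hi | rfl, h⟩
      · exact Or.inl ⟨i, hi, h⟩
      · exact Or.inr h

lemma runHist_congr {n : ℕ} (A : DetAlgo n) (f g : (Fin n → Bool) → ℝ) (Q : ℕ)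
    (h : ∀ i < Q, f (A.query (runHist A g i)) = g (A.query (runHist A g i))) :
    runHist A f Q = runHist A g Q := by
  induction Q with
  | zero => rfl
  | succ q ih =>
    simp only [runHist]
    rw [ih fun i hi => h i (Nat.lt_succ_of_lt hi), h q (Nat.lt_succ_self q)]

/-! ### Upper bound -/

open Classical in
/-- The learner that queries, regardless of the answers, the points with at most `d` coordinates
equal to `1`, and outputs some member of `F_{n,d}` agreeing with all observed values (`0` if there
is none). -/
noncomputable def ballAlgo (n d : ℕ) : DetAlgo n where
  query h := ind ((lowSets n d).toList.getD h.length ∅)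
  output h := if H : ∃ g ∈ Fclass n d, ∀ p ∈ h, g p.1 = p.2 then H.choose else 0

lemma ballAlgo_learns (n d : ℕ) :
    DetLearns (ballAlgo n d) (lowSets n d).card (Fclass n d) 0 := by
  intro f hf
  have H : ∃ g ∈ Fclass n d, ∀ p ∈ runHist (ballAlgo n d) f (lowSets n d).card, g p.1 = p.2 := by
    refine ⟨f, hf, fun p hp => ?_⟩
    obtain ⟨i, -, rfl⟩ := mem_runHist.mp hp
    rfl
  have hout : (ballAlgo n d).output (runHist (ballAlgo n d) f (lowSets n d).card) = H.choose :=
    dif_pos H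
  rw [hout]
  obtain ⟨hg, hagree⟩ := H.choose_spec
  generalize H.choose = g at hg hagree
  have hgf : g = f := by
    funext x
    refine sub_eq_zero.mp (eq_zero_of_degLE (f := fun x => g x - f x) (d := d) ?_ ?_ x)
    · intro S hS
      rw [fourierCoeff_sub, hg.2 S hS, hf.2 S hS, sub_zero]
    · intro U hU
      have hmem : U ∈ (lowSets n d).toList := by simpa [lowSets] using hU
      obtain ⟨i, hi, hiU⟩ := List.mem_iff_getElem.mp hmem
      have hq : (ballAlgo n d).query (runHist (ballAlgo n d) f i) = ind U := by
        simp only [ballAlgo, length_runHist]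
        rw [List.getD_eq_getElem _ _ hi, hiU]
      have := hagree (ind U, f (ind U))
        (mem_runHist.mpr ⟨i, by rwa [Finset.length_toList] at hi, by rw [hq]⟩)
      exact sub_eq_zero.mpr this
  simp [hgf, dist2]

/-! ### Lower bound -/

/-- Fewer than `N` points, `N` the number of sets of size at most `d`, cannot separate every
nonzero function of degree at most `d` from `0`: the degree condition
and the vanishing at the points form fewer than `2^n` linear equations in the `2^n` values. -/
lemma exists_ne_zero_vanishing {n d Q : ℕ} (hQ : Q < (lowSets n d).card)
    (X : Fin Q → Fin n → Bool) :
    ∃ g : (Fin n → Bool) → ℝ, g ≠ 0 ∧ DegLE n d g ∧ ∀ i, g (X i) = 0 := by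
  let L : ((Fin n → Bool) → ℝ) →ₗ[ℝ] (({S : Finset (Fin n) // ¬ S.card ≤ d} ⊕ Fin Q) → ℝ) :=
    { toFun := fun f => Sum.elim (fun S => fourierCoeff f S.1) (fun i => f (X i))
      map_add' := by
        intro f g
        funext s
        rcases s with S | i <;> simp [fourierCoeff, add_mul, Finset.sum_add_distrib, add_div]
      map_smul' := by
        intro c f
        funext s
        rcases s with S | i <;> simp [fourierCoeff, mul_assoc, ← Finset.mul_sum, mul_div_assoc] }
  have hlt : Module.finrank ℝ (({S : Finset (Fin n) // ¬ S.card ≤ d} ⊕ Fin Q) → ℝ) <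
      Module.finrank ℝ ((Fin n → Bool) → ℝ) := by
    have h1 : Fintype.card {S : Finset (Fin n) // S.card ≤ d} = (lowSets n d).card :=
      Fintype.card_subtype _
    have h2 := Fintype.card_subtype_compl (fun S : Finset (Fin n) => S.card ≤ d)
    have h3 := Fintype.card_subtype_le (fun S : Finset (Fin n) => S.card ≤ d)
    have h4 : Fintype.card (Finset (Fin n)) = 2 ^ n := by simp
    have h5 : Fintype.card (Fin n → Bool) = 2 ^ n := by simp
    rw [Module.finrank_fintype_fun_eq_card, Module.finrank_fintype_fun_eq_card,
      Fintype.card_sum, Fintype.card_fin, h5]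
    omega
  obtain ⟨g, hg, hg0⟩ := (Submodule.ne_bot_iff _).mp (LinearMap.ker_ne_bot_of_finrank_lt (f := L) hlt)
  have hL : L g = 0 := hg
  exact ⟨g, hg0, fun S hS => congrFun hL (Sum.inl ⟨S, not_le.mpr hS⟩),
    fun i => congrFun hL (Sum.inr i)⟩

/-- Scaling keeps the degree and the zeros, so it moves a nonzero function into the unit ball. -/
lemma exists_mem_Fclass_vanishing {n d Q : ℕ} (hQ : Q < (lowSets n d).card)
    (X : Fin Q → Fin n → Bool) :
    ∃ g ∈ Fclass n d, g ≠ 0 ∧ ∀ i, g (X i) = 0 := by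
  obtain ⟨g, hg0, hdeg, hX⟩ := exists_ne_zero_vanishing hQ X
  have hpos : 0 < ‖g‖ := norm_pos_iff.mpr hg0
  refine ⟨fun x => ‖g‖⁻¹ * g x, ⟨fun x => ?_, fun S hS => ?_⟩, fun h => hg0 ?_, fun i => ?_⟩
  · rw [abs_mul, abs_of_pos (inv_pos.mpr hpos), inv_mul_le_one₀ hpos]
    exact norm_le_pi_norm g x
  · have : fourierCoeff (fun x => ‖g‖⁻¹ * g x) S = ‖g‖⁻¹ * fourierCoeff g S := by
      simp [fourierCoeff, mul_assoc, ← Finset.mul_sum, mul_div_assoc]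
    rw [this, hdeg S hS, mul_zero]
  · funext x
    exact (mul_eq_zero.mp (congrFun h x)).resolve_left (inv_pos.mpr hpos).ne'
  · simp [hX i]

lemma zero_mem_Fclass (n d : ℕ) : (0 : (Fin n → Bool) → ℝ) ∈ Fclass n d :=
  ⟨fun x => by simp, fun S _ => by simp [fourierCoeff]⟩

lemma card_le_of_detLearns {n d Q : ℕ} {A : DetAlgo n} (hA : DetLearns A Q (Fclass n d) 0) :
    (lowSets n d).card ≤ Q := by
  by_contra! hQ
  obtain ⟨g, hg, hg0, hX⟩ := exists_mem_Fclass_vanishing hQ fun i => A.query (runHist A 0 i)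
  have hrun : runHist A g Q = runHist A 0 Q := runHist_congr A g 0 Q fun i hi => hX ⟨i, hi⟩
  have h1 := eq_of_dist2_le_zero (hA g hg)
  have h2 := eq_of_dist2_le_zero (hA 0 (zero_mem_Fclass n d))
  rw [hrun] at h1
  exact hg0 (h1.symm.trans h2)

end EIS

/-- **Theorem 1.9, equation (1.17).** For `n ∈ ℕ` and `d ∈ {1,…,n}`,
`Q(F_{n,d}, 0) = Σ_{j=0}^d C(n,j)`: there is a deterministic adaptive algorithm using
`Σ_{j=0}^d C(n,j)` queries learning `F_{n,d}` exactly, and no deterministic adaptive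
algorithm using fewer queries does so. -/
theorem stmt14 (n d : ℕ) (hd1 : 1 ≤ d) (hdn : d ≤ n) :
    (∃ A : DetAlgo n,
        DetLearns A (∑ j ∈ Finset.range (d + 1), n.choose j) (Fclass n d) 0) ∧
    ∀ (Q : ℕ) (A : DetAlgo n), DetLearns A Q (Fclass n d) 0 →
      (∑ j ∈ Finset.range (d + 1), n.choose j) ≤ Q := by
  rw [← card_lowSets]
  exact ⟨⟨ballAlgo n d, ballAlgo_learns n d⟩, fun Q A hA => card_le_of_detLearns hA⟩
end

section
/- Let n ∈ ℕ and d ∈ {0,…,n}. If f, g : {−1,1}^n → ℝ both have degree at most d and f(x) = g(x) for every point x in the Hamming ball of radius d centered at (1,…,1) (i.e. every x ∈ {−1,1}^n with at most d coordinates equal to −1), then f = g on all of {−1,1}^n. In particular, a function of degree at most d is completely determined by its values on the Σ_{j=0}^{d} C(n,j) points of this Hamming ball. -/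
/-!
A function `f` of degree at most `d` is recovered from the ball by induction on the size of the set
`T` of coordinates where the point `x₀` equals `-1`. If `|T| > d`, test `f` against
`φ(x) = w_T(x) ∏_{i ∉ T} (1 + x_i) = ∑_{S ⊇ T} w_S(x)`. All its frequencies lie above level `d`, so
`∑ₓ f(x) φ(x) = 0` (`sum_mul_walsh_mul_prod_eq_zero`). On the other hand `φ` is supported on the
points whose `-1` coordinates all lie in `T`; apart from `x₀` itself these have strictly fewer
`-1` coordinates. Hence `f(x₀)` is determined by the values of `f` at smaller points. Applied to
`f` and `g` at once, this shows that they agree everywhere.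
-/

open Finset

open EIS

/-- A point of the cube is determined by its set of `-1` coordinates. -/
theorem negSet_injective {n : ℕ} :
    Function.Injective (fun x : Fin n → Bool => univ.filter (fun i => x i = false)) := by
  intro x y hxy
  funext i
  have hi := Finset.ext_iff.mp hxy i
  simp only [mem_filter, mem_univ, true_and] at hi
  cases hx : x i <;> cases hy : y i <;> simp_all

/-- A function of degree at most `d` is orthogonal to `w_T · ∏_{i ∉ T} (1 + x_i)` when `d < |T|`:
this product expands as the sum of the Walsh functions of all supersets of `T`. -/
theorem sum_mul_walsh_mul_prod_eq_zero {n d : ℕ} {f : (Fin n → Bool) → ℝ} (hf : DegLE n d f)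
    {T : Finset (Fin n)} (hT : d < T.card) :
    ∑ x, f x * (walsh T x * ∏ i ∈ Tᶜ, (1 + (if x i then (1 : ℝ) else -1))) = 0 := by
  simp only [Finset.prod_one_add, Finset.mul_sum]
  rw [Finset.sum_comm]
  refine Finset.sum_eq_zero fun R hR => ?_
  have hdisj : Disjoint T R := disjoint_compl_right.mono_right (mem_powerset.mp hR)
  have hcoeff := hf (T ∪ R) (hT.trans_le (card_le_card subset_union_left))
  rw [EIS.fourierCoeff, div_eq_zero_iff] at hcoeff
  have hsum := hcoeff.resolve_right (by positivity)
  rw [← hsum]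
  refine Finset.sum_congr rfl fun x _ => ?_
  rw [walsh, walsh, Finset.prod_union hdisj]

/-- **Claim in the proof of (1.17).** If `f, g : {-1,1}ⁿ → ℝ` both have degree at most
`d ∈ {0,…,n}` and agree on the Hamming ball of radius `d` centered at `(1,…,1)` (points with at
most `d` coordinates equal to `-1`, encoded here by `false`), then `f = g` everywhere. -/
theorem stmt16 (n d : ℕ) (hdn : d ≤ n) (f g : (Fin n → Bool) → ℝ)
    (hf : DegLE n d f) (hg : DegLE n d g)
    (h : ∀ x : Fin n → Bool,
        (Finset.univ.filter (fun i => x i = false)).card ≤ d → f x = g x) :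
    f = g := by
  suffices key : ∀ (k : ℕ) (x₀ : Fin n → Bool),
      (univ.filter (fun i => x₀ i = false)).card = k → f x₀ = g x₀ from
    funext fun x => key _ x rfl
  intro k
  induction k using Nat.strong_induction_on with
  | _ k ih =>
  intro x₀ hk
  by_cases hd : (univ.filter (fun i => x₀ i = false)).card ≤ d
  · exact h x₀ hd
  set T := univ.filter (fun i => x₀ i = false) with hTdef
  have hT : d < T.card := not_le.mp hd
  set φ : (Fin n → Bool) → ℝ :=
    fun x => walsh T x * ∏ i ∈ Tᶜ, (1 + (if x i then (1 : ℝ) else -1)) with hφ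
  have hzero : ∑ x, (f x - g x) * φ x = 0 := by
    simp only [sub_mul, Finset.sum_sub_distrib]
    rw [hφ, sum_mul_walsh_mul_prod_eq_zero hf hT, sum_mul_walsh_mul_prod_eq_zero hg hT, sub_zero]
  have hsingle : ∑ x, (f x - g x) * φ x = (f x₀ - g x₀) * φ x₀ := by
    refine Finset.sum_eq_single x₀ (fun x _ hx => ?_) (fun hx => absurd (mem_univ _) hx)
    by_cases hsub : univ.filter (fun i => x i = false) ⊆ T
    · have hlt : (univ.filter (fun i => x i = false)).card < k :=
        hk ▸ card_lt_card (hsub.ssubset_of_ne fun he => hx (negSet_injective he))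
      rw [ih _ hlt x rfl, sub_self, zero_mul]
    -- A coordinate `i ∉ T` with `x_i = -1` kills the factor `1 + x_i` of `φ`.
    · obtain ⟨i, hi, hiT⟩ := Finset.not_subset.mp hsub
      have hxi : x i = false := (mem_filter.mp hi).2
      have hprod : ∏ i ∈ Tᶜ, (1 + (if x i then (1 : ℝ) else -1)) = 0 :=
        Finset.prod_eq_zero (mem_compl.mpr hiT) (by simp [hxi])
      simp only [hφ, hprod, mul_zero]
  have hne : φ x₀ ≠ 0 := by
    refine mul_ne_zero (Finset.prod_ne_zero_iff.mpr fun i _ => ?_)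
      (Finset.prod_ne_zero_iff.mpr fun i hi => ?_)
    · split_ifs <;> norm_num
    · have hxi : x₀ i = true := by simpa [hTdef] using hi
      norm_num [hxi]
  rw [hsingle] at hzero
  exact sub_eq_zero.mp ((mul_eq_zero.mp hzero).resolve_right hne)
end
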